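/- Let S be a quasi-hereditary algebra with a simple-preserving duality ° satisfying strong property A and with gfd(S) = 1. Then for every finite-dimensional S-module Q with gfd(Q) = 1 one has Ext^2_S(Q°, Q) ≠ 0. -/

import Mathlib

/-!
Common definitions for formalizing "On the global and ∇-filtration dimensions of
quasi-hereditary algebras" by Erdmann and Parker.

We work with a finite-dimensional algebra `S` over a field `k`; since `S` is
finite dimensional over `k`, the finite-dimensional `S`-modules are exactly the
finitely generated ones, so we express finite-dimensionality of a module `M` as
`Module.Finite S M`.
-/

open CategoryTheory

namespace QHPaper

variable (S : Type) [Ring S]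

/-- The subquotient `B ⧸ A` associated to two submodules `A B` of `M`. -/
abbrev subquot {M : ModuleCat.{0} S} (A B : Submodule S ↥M) : Type :=
  ↥B ⧸ (Submodule.comap B.subtype A)

/-- A filtration `⊥ = f 0 ≤ f 1 ≤ ⋯ ≤ f n = ⊤` of `M` whose `i`-th section
`f (i+1) / f i` is isomorphic to the prescribed module `D i`. -/
def HasFiltrationWithSections (M : ModuleCat.{0} S) (n : ℕ)
    (f : Fin (n + 1) → Submodule S ↥M) (D : Fin n → ModuleCat.{0} S) : Prop :=
  Monotone f ∧ f 0 = ⊥ ∧ f (Fin.last n) = ⊤ ∧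
    ∀ i : Fin n, Nonempty ((subquot S (f i.castSucc) (f i.succ)) ≃ₗ[S] ↥(D i))

/-- `L` occurs as a (simple) subquotient of `M`; for `L` simple this says that `L`
is a composition factor of `M`. -/
def IsCompFactor (L M : ModuleCat.{0} S) : Prop :=
  ∃ (A B : Submodule S ↥M), A ≤ B ∧ Nonempty ((subquot S A B) ≃ₗ[S] ↥L)

/-- `L` occurs with multiplicity `m` among the sections of a composition series of `M`. -/
def CompFactorMult (L M : ModuleCat.{0} S) (m : ℕ) : Prop :=
  ∃ (n : ℕ) (f : Fin (n + 1) → Submodule S ↥M),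
    Monotone f ∧ f 0 = ⊥ ∧ f (Fin.last n) = ⊤ ∧
    (∀ i : Fin n, IsSimpleModule S (subquot S (f i.castSucc) (f i.succ))) ∧
    Nat.card {i : Fin n // Nonempty ((subquot S (f i.castSucc) (f i.succ)) ≃ₗ[S] ↥L)} = m

/-- `P` is a projective cover of `M`: `P` is projective and there is a surjection
`P → M` whose kernel is superfluous in `P`. -/
def IsProjCover (P M : ModuleCat.{0} S) : Prop :=
  Module.Projective S ↥P ∧ ∃ π : ↥P →ₗ[S] ↥M, Function.Surjective π ∧
    ∀ N : Submodule S ↥P, N ⊔ LinearMap.ker π = ⊤ → N = ⊤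

/-- `I` is an injective hull of `M`: `I` is injective and there is an injection
`M → I` with essential image. -/
def IsInjHull (I M : ModuleCat.{0} S) : Prop :=
  Module.Injective S ↥I ∧ ∃ ι : ↥M →ₗ[S] ↥I, Function.Injective ι ∧
    ∀ N : Submodule S ↥I, N ⊓ LinearMap.range ι = ⊥ → N = ⊥

/-- The data of a quasi-hereditary algebra structure on `S` with weight poset `Λ`:
a full set `L` of pairwise non-isomorphic simple modules, their projective covers `P`
and injective hulls `I`, the standard modules `std` (largest quotient of `P lam` with
all composition factors `L mu`, `mu ≤ lam`), the costandard modules `costd`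
(largest submodule of `I lam` with all composition factors `L mu`, `mu ≤ lam`),
such that `L lam` occurs exactly once in `std lam` and `P lam` is filtered by
standard modules `std mu` with `mu ≥ lam`, with `std lam` occurring exactly once. -/
structure QHData (Λ : Type) [Fintype Λ] [PartialOrder Λ] where
  L : Λ → ModuleCat.{0} S
  P : Λ → ModuleCat.{0} S
  I : Λ → ModuleCat.{0} S
  std : Λ → ModuleCat.{0} S
  costd : Λ → ModuleCat.{0} S
  finiteL : ∀ lam, Module.Finite S ↥(L lam)
  simpleL : ∀ lam, IsSimpleModule S ↥(L lam)
  nonisoL : ∀ lam mu, lam ≠ mu → IsEmpty (↥(L lam) ≃ₗ[S] ↥(L mu))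
  fullL : ∀ M : ModuleCat.{0} S, IsSimpleModule S ↥M → ∃ lam, Nonempty (↥M ≃ₗ[S] ↥(L lam))
  projCover : ∀ lam, IsProjCover S (P lam) (L lam)
  injHull : ∀ lam, IsInjHull S (I lam) (L lam)
  stdSpec : ∀ lam, ∃ K : Submodule S ↥(P lam),
    Nonempty (↥(std lam) ≃ₗ[S] (↥(P lam) ⧸ K)) ∧
    (∀ mu, IsCompFactor S (L mu) (ModuleCat.of S (↥(P lam) ⧸ K)) → mu ≤ lam) ∧
    ∀ K' : Submodule S ↥(P lam),
      (∀ mu, IsCompFactor S (L mu) (ModuleCat.of S (↥(P lam) ⧸ K')) → mu ≤ lam) → K ≤ K'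
  costdSpec : ∀ lam, ∃ V : Submodule S ↥(I lam),
    Nonempty (↥(costd lam) ≃ₗ[S] ↥V) ∧
    (∀ mu, IsCompFactor S (L mu) (ModuleCat.of S ↥V) → mu ≤ lam) ∧
    ∀ V' : Submodule S ↥(I lam),
      (∀ mu, IsCompFactor S (L mu) (ModuleCat.of S ↥V') → mu ≤ lam) → V' ≤ V
  multOne : ∀ lam, CompFactorMult S (L lam) (std lam) 1
  projFilt : ∀ lam, ∃ (n : ℕ) (f : Fin (n + 1) → Submodule S ↥(P lam)) (g : Fin n → Λ),
    HasFiltrationWithSections S (P lam) n f (fun i => std (g i)) ∧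
    (∀ i, lam ≤ g i) ∧ Nat.card {i : Fin n // g i = lam} = 1

variable {Λ : Type} [Fintype Λ] [PartialOrder Λ]

/-- `M` has a filtration with costandard sections, i.e. `M ∈ F(∇)`. -/
def InCostdFilt (Q : QHData S Λ) (M : ModuleCat.{0} S) : Prop :=
  ∃ (n : ℕ) (f : Fin (n + 1) → Submodule S ↥M) (g : Fin n → Λ),
    HasFiltrationWithSections S M n f (fun i => Q.costd (g i))

/-- `M` has a filtration with standard sections, i.e. `M ∈ F(Δ)`. -/
def InStdFilt (Q : QHData S Λ) (M : ModuleCat.{0} S) : Prop :=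
  ∃ (n : ℕ) (f : Fin (n + 1) → Submodule S ↥M) (g : Fin n → Λ),
    HasFiltrationWithSections S M n f (fun i => Q.std (g i))

/-- `0 → N 0 → N 1 → ⋯ → N (n+1) → 0` is exact. -/
def IsExactSeq (n : ℕ) (N : Fin (n + 2) → ModuleCat.{0} S)
    (f : ∀ i : Fin (n + 1), ↥(N i.castSucc) →ₗ[S] ↥(N i.succ)) : Prop :=
  Function.Injective (f 0) ∧ Function.Surjective (f (Fin.last n)) ∧
    ∀ i : Fin n, LinearMap.range (f i.castSucc) = LinearMap.ker (f i.succ)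

/-- `M` has a ∇-resolution (co-resolution by modules in `F(∇)`) of length `d`:
`0 → M → M₀ → ⋯ → M_d → 0` with each `Mᵢ ∈ F(∇)`. -/
def GfdLE (Q : QHData S Λ) (M : ModuleCat.{0} S) (d : ℕ) : Prop :=
  ∃ (N : Fin (d + 2) → ModuleCat.{0} S)
    (f : ∀ i : Fin (d + 1), ↥(N i.castSucc) →ₗ[S] ↥(N i.succ)),
    IsExactSeq S d N f ∧ N 0 = M ∧ ∀ i : Fin (d + 1), InCostdFilt S Q (N i.succ)

/-- The ∇-filtration dimension (good filtration dimension) of a module. -/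
noncomputable def gfd (Q : QHData S Λ) (M : ModuleCat.{0} S) : ℕ :=
  sInf {d | GfdLE S Q M d}

/-- `M` has a resolution `0 → M_d → ⋯ → M₀ → M → 0` with each `Mᵢ ∈ F(Δ)`. -/
def WfdLE (Q : QHData S Λ) (M : ModuleCat.{0} S) (d : ℕ) : Prop :=
  ∃ (N : Fin (d + 2) → ModuleCat.{0} S)
    (f : ∀ i : Fin (d + 1), ↥(N i.castSucc) →ₗ[S] ↥(N i.succ)),
    IsExactSeq S d N f ∧ N (Fin.last (d + 1)) = M ∧
    ∀ i : Fin (d + 1), InStdFilt S Q (N i.castSucc)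

/-- The Δ-filtration dimension of a module. -/
noncomputable def wfd (Q : QHData S Λ) (M : ModuleCat.{0} S) : ℕ :=
  sInf {d | WfdLE S Q M d}

/-- `M` has a projective resolution of length `d`. -/
def ProjdimLE (M : ModuleCat.{0} S) (d : ℕ) : Prop :=
  ∃ (N : Fin (d + 2) → ModuleCat.{0} S)
    (f : ∀ i : Fin (d + 1), ↥(N i.castSucc) →ₗ[S] ↥(N i.succ)),
    IsExactSeq S d N f ∧ N (Fin.last (d + 1)) = M ∧
    ∀ i : Fin (d + 1), Module.Projective S ↥(N i.castSucc)

/-- The projective dimension of a module. -/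
noncomputable def projdim (M : ModuleCat.{0} S) : ℕ :=
  sInf {d | ProjdimLE S M d}

/-- `M` has an injective resolution of length `d`. -/
def InjdimLE (M : ModuleCat.{0} S) (d : ℕ) : Prop :=
  ∃ (N : Fin (d + 2) → ModuleCat.{0} S)
    (f : ∀ i : Fin (d + 1), ↥(N i.castSucc) →ₗ[S] ↥(N i.succ)),
    IsExactSeq S d N f ∧ N 0 = M ∧
    ∀ i : Fin (d + 1), Module.Injective S ↥(N i.succ)

/-- The injective dimension of a module. -/
noncomputable def injdim (M : ModuleCat.{0} S) : ℕ :=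
  sInf {d | InjdimLE S M d}

/-- `gfd(S)`: the supremum of the ∇-filtration dimensions of all
finite-dimensional `S`-modules. -/
noncomputable def gfdAlg (Q : QHData S Λ) : ℕ :=
  sSup {d | ∃ M : ModuleCat.{0} S, Module.Finite S ↥M ∧ gfd S Q M = d}

/-- `wfd(S)`: the supremum of the Δ-filtration dimensions of all
finite-dimensional `S`-modules. -/
noncomputable def wfdAlg (Q : QHData S Λ) : ℕ :=
  sSup {d | ∃ M : ModuleCat.{0} S, Module.Finite S ↥M ∧ wfd S Q M = d}

/-- The global dimension of `S`: the supremum of the projective dimensions of all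
finite-dimensional `S`-modules. -/
noncomputable def globdim : ℕ :=
  sSup {d | ∃ M : ModuleCat.{0} S, Module.Finite S ↥M ∧ projdim S M = d}

/-- `Ext^n_S(A, B) ≠ 0`. -/
noncomputable def extNe (A B : ModuleCat.{0} S) (n : ℕ) : Prop :=
  Nontrivial ↥(((Ext ℤ (ModuleCat.{0} S) n).obj (Opposite.op A)).obj B)

/-- A simple-preserving duality on `S`: a contravariant, exact, fully faithful,
additive self-functor `D` on the category of finite-dimensional `S`-modules with
`D (D M) ≅ M` and `D (L lam) ≅ L lam` for all `lam`. -/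
structure Duality (Q : QHData S Λ) where
  D : ModuleCat.{0} S → ModuleCat.{0} S
  Dmap : ∀ {A B : ModuleCat.{0} S}, (↥A →ₗ[S] ↥B) → (↥(D B) →ₗ[S] ↥(D A))
  finD : ∀ M : ModuleCat.{0} S, Module.Finite S ↥M → Module.Finite S ↥(D M)
  Did : ∀ A : ModuleCat.{0} S, Module.Finite S ↥A →
    Dmap (LinearMap.id : ↥A →ₗ[S] ↥A) = LinearMap.id
  Dcomp : ∀ {A B C : ModuleCat.{0} S}, Module.Finite S ↥A → Module.Finite S ↥B →
    Module.Finite S ↥C → ∀ (f : ↥A →ₗ[S] ↥B) (g : ↥B →ₗ[S] ↥C),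
      Dmap (g ∘ₗ f) = Dmap f ∘ₗ Dmap g
  Dadd : ∀ {A B : ModuleCat.{0} S}, Module.Finite S ↥A → Module.Finite S ↥B →
    ∀ (f g : ↥A →ₗ[S] ↥B), Dmap (f + g) = Dmap f + Dmap g
  Dfull : ∀ {A B : ModuleCat.{0} S}, Module.Finite S ↥A → Module.Finite S ↥B →
    Function.Bijective (fun f : ↥A →ₗ[S] ↥B => Dmap f)
  Dexact : ∀ {A B C : ModuleCat.{0} S}, Module.Finite S ↥A → Module.Finite S ↥B →
    Module.Finite S ↥C → ∀ (f : ↥A →ₗ[S] ↥B) (g : ↥B →ₗ[S] ↥C),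
      Function.Injective f → Function.Surjective g →
      LinearMap.range f = LinearMap.ker g →
      Function.Injective (Dmap g) ∧ Function.Surjective (Dmap f) ∧
        LinearMap.range (Dmap g) = LinearMap.ker (Dmap f)
  Dinvol : ∀ M : ModuleCat.{0} S, Module.Finite S ↥M → Nonempty (↥(D (D M)) ≃ₗ[S] ↥M)
  DL : ∀ lam, Nonempty (↥(D (Q.L lam)) ≃ₗ[S] ↥(Q.L lam))

/-- Strong property A: `mu < lam` implies `gfd (L mu) < gfd (L lam)`. -/
def StrongPropA (Q : QHData S Λ) : Prop :=
  ∀ mu lam : Λ, mu < lam → gfd S Q (Q.L mu) < gfd S Q (Q.L lam)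

/-- Property A: `mu < lam` implies `gfd (L mu) ≤ gfd (L lam)`. -/
def PropA (Q : QHData S Λ) : Prop :=
  ∀ mu lam : Λ, mu < lam → gfd S Q (Q.L mu) ≤ gfd S Q (Q.L lam)

/-- Property B: `mu < lam` implies `wfd (∇ mu) ≤ wfd (∇ lam)`. -/
def PropB (Q : QHData S Λ) : Prop :=
  ∀ mu lam : Λ, mu < lam → wfd S Q (Q.costd mu) ≤ wfd S Q (Q.costd lam)

/-- Property C: `wfd (∇ lam) = gfd S - inj (∇ lam)` for all `lam`. -/
def PropC (Q : QHData S Λ) : Prop :=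
  ∀ lam : Λ, wfd S Q (Q.costd lam) = gfdAlg S Q - injdim S (Q.costd lam)

/-- Property D: `wfd (∇ lam) = wfd (L lam)` for all `lam`. -/
def PropD (Q : QHData S Λ) : Prop :=
  ∀ lam : Λ, wfd S Q (Q.costd lam) = wfd S Q (Q.L lam)

/-- Property E: `mu < lam` implies `inj (∇ mu) ≥ inj (∇ lam)`. -/
def PropE (Q : QHData S Λ) : Prop :=
  ∀ mu lam : Λ, mu < lam → injdim S (Q.costd lam) ≤ injdim S (Q.costd mu)

/-- The partial order is minimal for the quasi-hereditary structure: whenever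
`mu < lam` are adjacent, `L mu` is a composition factor of `Δ lam` or of `∇ lam`. -/
def MinimalOrder (Q : QHData S Λ) : Prop :=
  ∀ mu lam : Λ, mu < lam → (¬ ∃ nu, mu < nu ∧ nu < lam) →
    IsCompFactor S (Q.L mu) (Q.std lam) ∨ IsCompFactor S (Q.L mu) (Q.costd lam)

/-- `S` is connected (indecomposable as an algebra, i.e. one block): the only
central idempotents are `0` and `1`. -/
def ConnectedRing : Prop :=
  ∀ c : S, c * c = c → (∀ s : S, c * s = s * c) → c = 0 ∨ c = 1

/-- A tilting module: a module in `F(Δ) ∩ F(∇)`. -/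
def IsTilting (Q : QHData S Λ) (T : ModuleCat.{0} S) : Prop :=
  InStdFilt S Q T ∧ InCostdFilt S Q T

/-- The indecomposable tilting module `T(lam)`: an indecomposable tilting module in
which `L lam` occurs exactly once and all other composition factors `L mu` have
`mu < lam`. -/
def IsIndecTilting (Q : QHData S Λ) (lam : Λ) (T : ModuleCat.{0} S) : Prop :=
  IsTilting S Q T ∧ Nontrivial ↥T ∧
    (∀ A B : Submodule S ↥T, IsCompl A B → A = ⊥ ∨ B = ⊥) ∧
    CompFactorMult S (Q.L lam) T 1 ∧
    ∀ mu, IsCompFactor S (Q.L mu) T → mu = lam ∨ mu < lam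

/-- A full tilting module: a (finite-dimensional) tilting module having every
indecomposable tilting module as a direct summand. -/
def IsFullTilting (Q : QHData S Λ) (T : ModuleCat.{0} S) : Prop :=
  IsTilting S Q T ∧ Module.Finite S ↥T ∧
    ∀ (lam : Λ) (Tl : ModuleCat.{0} S), IsIndecTilting S Q lam Tl →
      ∃ Cc : ModuleCat.{0} S, Nonempty (↥T ≃ₗ[S] (↥Tl × ↥Cc))

/-- The Ringel dual ring `S' = End_S(T)^op`. -/
abbrev RingelDualRing (T : ModuleCat.{0} S) : Type := (Module.End S ↥T)ᵐᵒᵖ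

/-- `Hom_S(T, X)` is a module over `S' = End_S(T)^op` via `f • φ = φ ∘ f`. -/
instance homTModule (T X : ModuleCat.{0} S) :
    Module (RingelDualRing S T) (↥T →ₗ[S] ↥X) where
  smul a φ := φ ∘ₗ a.unop
  one_smul φ := rfl
  mul_smul a b φ := rfl
  smul_zero a := rfl
  smul_add a φ ψ := rfl
  add_smul a b φ := by
    ext x
    show φ ((a.unop + b.unop) x) = φ (a.unop x) + φ (b.unop x)
    rw [LinearMap.add_apply, map_add]
  zero_smul φ := by
    ext x
    show φ ((0 : Module.End S ↥T) x) = 0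
    rw [LinearMap.zero_apply, map_zero]

/-- The `S'`-module `Hom_S(T, X)`, i.e. the image of `X` under the functor
`F = Hom_S(T, -)`. -/
noncomputable def homTMod (T X : ModuleCat.{0} S) :
    ModuleCat.{0} (RingelDualRing S T) :=
  ModuleCat.of (RingelDualRing S T) (↥T →ₗ[S] ↥X)

/-- `Q'` is a Ringel dual quasi-hereditary structure for `(Q, T)`:
`T` is a full tilting module, `Q'` is a quasi-hereditary structure on
`S' = End_S(T)^op` for the opposite poset, and its standard modules are
`Δ'(lam) = Hom_S(T, ∇(lam))`. -/
def IsRingelDualData (Q : QHData S Λ) (T : ModuleCat.{0} S)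
    (Q' : QHData (RingelDualRing S T) Λᵒᵈ) : Prop :=
  IsFullTilting S Q T ∧
    ∀ lam : Λ, Nonempty
      (↥(Q'.std (OrderDual.toDual lam)) ≃ₗ[RingelDualRing S T]
        (↥T →ₗ[S] ↥(Q.costd lam)))

/-- `0 → T_d → ⋯ → T_0 → M → 0` exact with all `T_i` tilting modules. -/
def TiltResLE (Q : QHData S Λ) (M : ModuleCat.{0} S) (d : ℕ) : Prop :=
  ∃ (N : Fin (d + 2) → ModuleCat.{0} S)
    (f : ∀ i : Fin (d + 1), ↥(N i.castSucc) →ₗ[S] ↥(N i.succ)),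
    IsExactSeq S d N f ∧ N (Fin.last (d + 1)) = M ∧
    ∀ i : Fin (d + 1), IsTilting S Q (N i.castSucc)

/-- An idempotent `e` is primitive if it is nonzero and is not the sum of two
nonzero orthogonal idempotents. -/
def IsPrimitiveIdempotent (e : S) : Prop :=
  e * e = e ∧ e ≠ 0 ∧ ∀ a b : S, a * a = a → b * b = b → a * b = 0 → b * a = 0 →
    e = a + b → a = 0 ∨ b = 0

/-- The additive subgroup `e•M = {m | e • m = m}` of `M` (for `e` idempotent). -/
def cornerSet (eG : S) (M : ModuleCat.{0} S) : AddSubgroup ↥M where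
  carrier := {m | eG • m = m}
  add_mem' := by
    intro a b ha hb
    simp only [Set.mem_setOf_eq] at *
    rw [smul_add, ha, hb]
  zero_mem' := by
    simp only [Set.mem_setOf_eq]
    rw [smul_zero]
  neg_mem' := by
    intro a ha
    simp only [Set.mem_setOf_eq] at *
    rw [smul_neg, ha]

/-- The `R`-module structure on `e•M`, where `ι : R → S` identifies `R` with the
corner ring `eSe` (as a non-unital ring, with `ι 1 = e`). -/
def cornerModuleStructure (R : Type) [Ring R] (ι : R →ₙ+* S) (eG : S)
    (hone : ι 1 = eG) (hrange : ∀ r : R, eG * ι r * eG = ι r)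
    (M : ModuleCat.{0} S) : Module R ↥(cornerSet S eG M) where
  smul r m := ⟨ι r • (m : ↥M), by
    have hm : eG • (m : ↥M) = (m : ↥M) := m.2
    show eG • (ι r • (m : ↥M)) = ι r • (m : ↥M)
    have h : eG • (ι r • (m : ↥M)) = (eG * ι r * eG) • (m : ↥M) := by
      rw [mul_assoc, mul_smul, mul_smul, hm]
    rw [h, hrange]⟩
  one_smul m := by
    apply Subtype.ext
    show ι 1 • (m : ↥M) = (m : ↥M)
    rw [hone]
    exact m.2
  mul_smul r s m := by
    apply Subtype.ext
    show ι (r * s) • (m : ↥M) = ι r • (ι s • (m : ↥M))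
    rw [map_mul, mul_smul]
  smul_zero r := by
    apply Subtype.ext
    show ι r • (0 : ↥M) = 0
    rw [smul_zero]
  smul_add r m n := by
    apply Subtype.ext
    show ι r • ((m : ↥M) + (n : ↥M)) = ι r • (m : ↥M) + ι r • (n : ↥M)
    rw [smul_add]
  add_smul r s m := by
    apply Subtype.ext
    show ι (r + s) • (m : ↥M) = ι r • (m : ↥M) + ι s • (m : ↥M)
    rw [map_add, add_smul]
  zero_smul m := by
    apply Subtype.ext
    show ι 0 • (m : ↥M) = 0
    rw [map_zero, zero_smul]

/-- The `R`-module `e•M`, where `R ≅ eSe` via `ι`. -/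
noncomputable def cornerMod (R : Type) [Ring R] (ι : R →ₙ+* S) (eG : S)
    (hone : ι 1 = eG) (hrange : ∀ r : R, eG * ι r * eG = ι r)
    (M : ModuleCat.{0} S) : ModuleCat.{0} R :=
  @ModuleCat.of R _ ↥(cornerSet S eG M) _
    (cornerModuleStructure S R ι eG hone hrange M)

end QHPaper

section PartA

namespace QHProof
open QHPaper

variable {S : Type} [Ring S] {Λ : Type} [Fintype Λ] [PartialOrder Λ] (H : QHData S Λ)

instance instSimpleL (lam : Λ) : IsSimpleModule S (H.L lam) := H.simpleL lam
instance instProjP (lam : Λ) : Module.Projective S (H.P lam) := (H.projCover lam).1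
instance instInjI (lam : Λ) : Module.Injective S (H.I lam) := (H.injHull lam).1

/-- The projection of the projective cover. -/
noncomputable def pr (lam : Λ) : H.P lam →ₗ[S] H.L lam := (H.projCover lam).2.choose
lemma pr_surj (lam : Λ) : Function.Surjective (pr H lam) :=
  (H.projCover lam).2.choose_spec.1
lemma pr_super (lam : Λ) (N : Submodule S (H.P lam)) (h : N ⊔ LinearMap.ker (pr H lam) = ⊤) :
    N = ⊤ := (H.projCover lam).2.choose_spec.2 N h

/-- The inclusion in the injective hull. -/
noncomputable def io (lam : Λ) : H.L lam →ₗ[S] H.I lam := (H.injHull lam).2.choose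
lemma io_inj (lam : Λ) : Function.Injective (io H lam) :=
  (H.injHull lam).2.choose_spec.1
lemma io_ess (lam : Λ) (N : Submodule S (H.I lam)) (h : N ⊓ LinearMap.range (io H lam) = ⊥) :
    N = ⊥ := (H.injHull lam).2.choose_spec.2 N h

variable {A B M N : Type} [AddCommGroup A] [Module S A] [AddCommGroup B] [Module S B]
  [AddCommGroup M] [Module S M] [AddCommGroup N] [Module S N]

lemma lift {lam : Λ} (g : A →ₗ[S] B) (hg : Function.Surjective g) (h : H.P lam →ₗ[S] B) :
    ∃ t : H.P lam →ₗ[S] A, g ∘ₗ t = h :=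
  Module.projective_lifting_property g h hg

lemma pr_ne (lam : Λ) : pr H lam ≠ 0 := by
  intro h
  have : Nontrivial (H.L lam) := IsSimpleModule.nontrivial S _
  obtain ⟨x, hx⟩ := exists_ne (0 : H.L lam)
  obtain ⟨y, rfl⟩ := pr_surj H lam x
  exact hx (by rw [h]; rfl)

lemma ker_coatom {T : Type} [AddCommGroup T] [Module S T] [IsSimpleModule S T]
    (g : M →ₗ[S] T) (hg : g ≠ 0) : IsCoatom (LinearMap.ker g) := by
  have hs : Function.Surjective g := (LinearMap.surjective_or_eq_zero g).resolve_right hg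
  rw [← isSimpleModule_iff_isCoatom]
  exact IsSimpleModule.congr (g.quotKerEquivOfSurjective hs)

lemma le_ker_pr {lam : Λ} {N : Submodule S (H.P lam)} (h : N ≠ ⊤) :
    N ≤ LinearMap.ker (pr H lam) := by
  by_contra hc
  apply h
  apply pr_super
  have := (ker_coatom (pr H lam) (pr_ne H lam)).2 (N ⊔ LinearMap.ker (pr H lam))
  apply this
  rw [right_lt_sup]
  exact hc

lemma surj_of {lam : Λ} (f : A →ₗ[S] H.P lam) (h : pr H lam ∘ₗ f ≠ 0) :
    Function.Surjective f := by
  rw [← LinearMap.range_eq_top]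
  by_contra hc
  apply h
  ext x
  exact le_ker_pr H hc ⟨x, rfl⟩

lemma head_iso {lam : Λ} {T : Type} [AddCommGroup T] [Module S T] [IsSimpleModule S T]
    (g : H.P lam →ₗ[S] T) (hg : g ≠ 0) : Nonempty (T ≃ₗ[S] H.L lam) := by
  have hs : Function.Surjective g := (LinearMap.surjective_or_eq_zero g).resolve_right hg
  have h1 : LinearMap.ker g ≤ LinearMap.ker (pr H lam) := le_ker_pr H (ker_coatom g hg).1
  have h2 : LinearMap.ker g = LinearMap.ker (pr H lam) := by
    rcases (ker_coatom g hg).le_iff.1 h1 with h | h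
    · exact absurd h (ker_coatom (pr H lam) (pr_ne H lam)).1
    · exact h.symm
  exact ⟨(g.quotKerEquivOfSurjective hs).symm.trans ((Submodule.quotEquivOfEq _ _ h2).trans
    ((pr H lam).quotKerEquivOfSurjective (pr_surj H lam)))⟩

lemma head_eq {lam mu : Λ} (g : H.P lam →ₗ[S] H.L mu) (hg : g ≠ 0) : lam = mu := by
  obtain ⟨e⟩ := head_iso H g hg
  by_contra hc
  exact (H.nonisoL mu lam (Ne.symm hc)).false e

lemma exists_of_factor {mu : Λ} {M : ModuleCat.{0} S} (h : IsCompFactor S (H.L mu) M) :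
    ∃ h : H.P mu →ₗ[S] M, h ≠ 0 := by
  obtain ⟨A, B, hAB, ⟨e⟩⟩ := h
  obtain ⟨t, ht⟩ := lift H (Submodule.mkQ (Submodule.comap B.subtype A))
    (Submodule.mkQ_surjective _) (e.symm.toLinearMap ∘ₗ pr H mu)
  refine ⟨B.subtype ∘ₗ t, fun h0 => pr_ne H mu ?_⟩
  have h1 : t = 0 := by
    ext x
    exact congrArg (fun f => f x) h0
  have h2 : e.symm.toLinearMap ∘ₗ pr H mu = 0 := by rw [← ht, h1, LinearMap.comp_zero]
  ext x
  have := congrArg (fun f => f x) h2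
  simpa using this

lemma ker_le_of_ne {lam : Λ} (h : H.P lam →ₗ[S] M) (hh : h ≠ 0) :
    LinearMap.ker h ≤ LinearMap.ker (pr H lam) :=
  le_ker_pr H (by rwa [Ne, LinearMap.ker_eq_top])

lemma factor_of {mu : Λ} {M : ModuleCat.{0} S} (h : H.P mu →ₗ[S] M) (hh : h ≠ 0) :
    IsCompFactor S (H.L mu) M := by
  set A := (LinearMap.ker (pr H mu)).map h with hA
  set B := LinearMap.range h with hB
  refine ⟨A, B, ?_, ?_⟩
  · rintro _ ⟨x, -, rfl⟩
    exact ⟨x, rfl⟩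
  · let q : H.P mu →ₗ[S] (↥B ⧸ (Submodule.comap B.subtype A)) :=
      Submodule.mkQ _ ∘ₗ h.rangeRestrict
    have hq : Function.Surjective q :=
      (Submodule.mkQ_surjective _).comp h.surjective_rangeRestrict
    have hk : LinearMap.ker q = LinearMap.ker (pr H mu) := by
      ext x
      simp only [q, LinearMap.mem_ker, LinearMap.comp_apply, Submodule.mkQ_apply,
        Submodule.Quotient.mk_eq_zero, Submodule.mem_comap]
      constructor
      · rintro ⟨y, hy, hxy⟩
        have h3 : x - y ∈ LinearMap.ker h := by
          rw [LinearMap.mem_ker, map_sub, hxy]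
          simp
        have h4 := ker_le_of_ne H h hh h3
        rw [LinearMap.mem_ker, map_sub] at h4
        rw [sub_eq_zero.1 h4]
        exact hy
      · intro hx
        exact ⟨x, hx, rfl⟩
    exact ⟨(q.quotKerEquivOfSurjective hq).symm.trans ((Submodule.quotEquivOfEq _ _ hk).trans
      ((pr H mu).quotKerEquivOfSurjective (pr_surj H mu)))⟩

lemma exists_hom (M : Type) [AddCommGroup M] [Module S M] [Nontrivial M] :
    ∃ (nu : Λ) (h : H.P nu →ₗ[S] M), h ≠ 0 := by
  obtain ⟨m, hm⟩ := exists_ne (0 : M)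
  set B := Submodule.span S {m}
  have : Nontrivial B := ⟨⟨⟨m, Submodule.mem_span_singleton_self m⟩, 0, by simpa using hm⟩⟩
  have : Module.Finite S B := Module.Finite.iff_fg.2 (Submodule.fg_span_singleton m)
  obtain ⟨C, hC⟩ := IsCoatomic.exists_coatom (Submodule S B)
  have hs : IsSimpleModule S (B ⧸ C) := isSimpleModule_iff_isCoatom.2 hC
  obtain ⟨nu, ⟨e⟩⟩ := H.fullL (ModuleCat.of S (B ⧸ C)) hs
  obtain ⟨t, ht⟩ := lift H C.mkQ (Submodule.mkQ_surjective _) (e.symm.toLinearMap ∘ₗ pr H nu)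
  refine ⟨nu, B.subtype ∘ₗ t, fun h0 => pr_ne H nu ?_⟩
  have h1 : t = 0 := by
    ext x
    exact congrArg (fun f => f x) h0
  have h2 : e.symm.toLinearMap ∘ₗ pr H nu = 0 := by rw [← ht, h1, LinearMap.comp_zero]
  ext x
  have := congrArg (fun f => f x) h2
  simpa using this

lemma le_of_hom_std {mu lam : Λ} (h : H.P mu →ₗ[S] H.std lam) (hh : h ≠ 0) : mu ≤ lam := by
  obtain ⟨K, ⟨e⟩, h1, -⟩ := H.stdSpec lam
  apply h1 mu
  apply factor_of H (M := ModuleCat.of S (↥(H.P lam) ⧸ K)) (e.toLinearMap ∘ₗ h)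
  intro h0
  apply hh
  ext x
  have := congrArg (fun f => f x) h0
  simpa using this

lemma le_of_hom_costd {mu lam : Λ} (h : H.P mu →ₗ[S] H.costd lam) (hh : h ≠ 0) : mu ≤ lam := by
  obtain ⟨K, ⟨e⟩, h1, -⟩ := H.costdSpec lam
  apply h1 mu
  apply factor_of H (M := ModuleCat.of S K) (e.toLinearMap ∘ₗ h)
  intro h0
  apply hh
  ext x
  have := congrArg (fun f => f x) h0
  simpa using this

/-- If `lam` is maximal then `P lam = std lam`. -/
lemma std_of_max {lam : Λ} (hl : IsMax lam) : Nonempty (H.P lam ≃ₗ[S] H.std lam) := by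
  obtain ⟨n, f, g, ⟨hm, h0, h1, hs⟩, hg, hc⟩ := H.projFilt lam
  have hg' : ∀ i, g i = lam := fun i => (hl.eq_of_le (hg i)).symm
  have hn : n = 1 := by
    simp only [hg'] at hc
    simpa using hc
  subst hn
  obtain ⟨e⟩ := hs 0
  change _ ≃ₗ[S] H.std (g 0) at e
  rw [show g 0 = lam from hg' 0] at e
  have h1' : f (Fin.succ 0) = ⊤ := h1
  have h0' : f (Fin.castSucc 0) = ⊥ := h0
  have e2 : (↥(f (Fin.succ 0)) ⧸ (Submodule.comap (f (Fin.succ 0)).subtype (f (Fin.castSucc 0))))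
      ≃ₗ[S] H.P lam := by
    refine (Submodule.quotEquivOfEqBot _ ?_).trans (LinearEquiv.ofTop _ h1')
    rw [h0']
    simp
  exact ⟨e2.symm.trans e⟩

/-- A surjection from the projective cover to the standard module. -/
lemma exists_std_surj (lam : Λ) : ∃ h : H.P lam →ₗ[S] H.std lam, Function.Surjective h := by
  obtain ⟨K, ⟨e⟩, -, -⟩ := H.stdSpec lam
  exact ⟨e.symm.toLinearMap ∘ₗ K.mkQ, e.symm.surjective.comp (Submodule.mkQ_surjective _)⟩

lemma step {lam : Λ} {f g : Submodule S M} (hs : IsSimpleModule S (↥g ⧸ f.comap g.subtype))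
    (hne : ¬ Nonempty ((↥g ⧸ f.comap g.subtype) ≃ₗ[S] H.L lam))
    (h : H.P lam →ₗ[S] M) (hr : LinearMap.range h ≤ g) : LinearMap.range h ≤ f := by
  let h' : H.P lam →ₗ[S] g := h.codRestrict g (fun x => hr ⟨x, rfl⟩)
  have h0 : (Submodule.mkQ (f.comap g.subtype)) ∘ₗ h' = 0 := by
    by_contra hc
    exact hne (head_iso H _ hc)
  rintro _ ⟨x, rfl⟩
  have := congrArg (fun t => t x) h0
  simpa [h', Submodule.Quotient.mk_eq_zero] using this

/-- The radical of the standard module has no factor `L lam`. -/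
lemma std_rad (lam : Λ) : ∃ A : Submodule S (H.std lam),
    (∀ h : H.P lam →ₗ[S] H.std lam, LinearMap.range h ≤ A → h = 0) ∧
    Nonempty ((H.std lam ⧸ A) ≃ₗ[S] H.L lam) := by
  obtain ⟨n, f, hm, h0, h1, hs, hc⟩ := H.multOne lam
  rw [Nat.card_eq_one_iff_unique] at hc
  obtain ⟨hsub, ⟨⟨i0, hi0⟩⟩⟩ := hc
  have hne : ∀ i, i ≠ i0 → ¬ Nonempty ((subquot S (f i.castSucc) (f i.succ)) ≃ₗ[S] ↥(H.L lam)) := by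
    intro i hi hx
    exact hi (congrArg Subtype.val (hsub.elim ⟨i, hx⟩ ⟨i0, hi0⟩))
  have key1 : ∀ j : Fin (n + 1), j ≤ i0.castSucc → ∀ h : H.P lam →ₗ[S] H.std lam,
      LinearMap.range h ≤ f j → h = 0 := by
    intro j
    induction j using Fin.induction with
    | zero =>
      intro _ h hr
      rw [h0, le_bot_iff, LinearMap.range_eq_bot] at hr
      exact hr
    | succ i ih =>
      intro hi h hr
      have hlt : i < i0 := by
        rw [Fin.le_def] at hi
        rw [Fin.lt_def]
        simp at hi
        omega
      refine ih ?_ h (step H (hs i) (hne i hlt.ne) h hr)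
      exact Fin.castSucc_le_castSucc_iff.2 hlt.le
  have key2 : ∀ j : Fin (n + 1), i0.succ ≤ j → ∀ h : H.P lam →ₗ[S] H.std lam,
      LinearMap.range h ≤ f j → LinearMap.range h ≤ f i0.succ := by
    intro j
    induction j using Fin.induction with
    | zero =>
      intro hj
      exact absurd hj (by simp)
    | succ i ih =>
      intro hi h hr
      by_cases he : i = i0
      · rw [he] at hr
        exact hr
      · have hlt : i0 < i := by
          rw [Fin.le_def] at hi
          rw [Fin.lt_def]
          simp at hi
          have : (i : ℕ) ≠ i0 := fun h => he (Fin.ext h)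
          omega
        refine ih ?_ h (step H (hs i) (hne i he) h hr)
        rw [Fin.le_def]
        rw [Fin.lt_def] at hlt
        simpa using hlt
  obtain ⟨p, hp⟩ := exists_std_surj H lam
  have htop : f i0.succ = ⊤ := by
    rw [eq_top_iff, ← LinearMap.range_eq_top.2 hp]
    exact key2 (Fin.last n) (Fin.le_last _) p (by rw [h1]; exact le_top)
  refine ⟨f i0.castSucc, key1 _ le_rfl, ?_⟩
  obtain ⟨e⟩ := hi0
  suffices h : Nonempty ((H.std lam ⧸ f i0.castSucc) ≃ₗ[S]
      subquot S (f i0.castSucc) (f i0.succ)) from ⟨h.some.trans e⟩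
  refine ⟨(Submodule.Quotient.equiv _ _ (LinearEquiv.ofTop _ htop) ?_).symm⟩
  ext x
  constructor
  · rintro ⟨y, hy, rfl⟩
    exact hy
  · intro hx
    exact ⟨⟨x, by rw [htop]; trivial⟩, hx, rfl⟩

end QHProof

end PartA

section PartB

namespace QHProof
open QHPaper

variable {S : Type} [Ring S] {Λ : Type} [Fintype Λ] [PartialOrder Λ] (H : QHData S Λ)
variable {A B M N : Type} [AddCommGroup A] [Module S A] [AddCommGroup B] [Module S B]
  [AddCommGroup M] [Module S M] [AddCommGroup N] [Module S N]

/-- All composition factors of `M` are indexed by minimal weights. -/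
def XType (M : Type) [AddCommGroup M] [Module S M] : Prop :=
  ∀ nu : Λ, ¬ IsMin nu → ∀ h : H.P nu →ₗ[S] M, h = 0

lemma comp_eq_zero {P : Type} [AddCommGroup P] [Module S P] (f : M →ₗ[S] N)
    (hf : Function.Injective f) (h : P →ₗ[S] M)
    (h0 : f ∘ₗ h = 0) : h = 0 := by
  ext x
  apply hf
  rw [LinearMap.zero_apply, map_zero]
  exact congrArg (fun t => t x) h0

lemma XType.of_inj (f : M →ₗ[S] N) (hf : Function.Injective f) (hN : XType H N) : XType H M :=
  fun nu hnu h => comp_eq_zero f hf h (hN nu hnu _)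

lemma XType.of_surj (f : M →ₗ[S] N) (hf : Function.Surjective f) (hM : XType H M) :
    XType H N := by
  intro nu hnu h
  obtain ⟨t, ht⟩ := lift H f hf h
  rw [← ht, hM nu hnu t, LinearMap.comp_zero]

lemma XType_L {mu : Λ} (hmu : IsMin mu) : XType H (H.L mu) := by
  intro nu hnu h
  by_contra hc
  rw [head_eq H h hc] at hnu
  exact hnu hmu

/-- A nonzero map to the standard module which is not surjective from its own projective
cover vanishes. -/
lemma hom_std_zero {lam : Λ} (h : H.P lam →ₗ[S] H.std lam) (hn : ¬ Function.Surjective h) :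
    h = 0 := by
  obtain ⟨A, hA, ⟨e⟩⟩ := std_rad H lam
  obtain ⟨p, hp⟩ := exists_std_surj H lam
  apply hA
  let q : H.P lam →ₗ[S] H.L lam := e.toLinearMap ∘ₗ A.mkQ ∘ₗ p
  have hq : q ≠ 0 := by
    intro h0
    have hs : Function.Surjective q := e.surjective.comp ((Submodule.mkQ_surjective _).comp hp)
    have : Nontrivial (H.L lam) := IsSimpleModule.nontrivial S _
    obtain ⟨x, hx⟩ := exists_ne (0 : H.L lam)
    obtain ⟨y, rfl⟩ := hs x
    exact hx (by rw [h0]; rfl)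
  have hk : LinearMap.ker q = LinearMap.ker (pr H lam) := by
    have h1 := le_ker_pr H (ker_coatom q hq).1
    rcases (ker_coatom q hq).le_iff.1 h1 with h | h
    · exact absurd h (ker_coatom (pr H lam) (pr_ne H lam)).1
    · exact h.symm
  have h3 : (LinearMap.range h).comap p ≠ ⊤ := by
    intro h4
    apply hn
    rw [← LinearMap.range_eq_top, eq_top_iff]
    intro x _
    obtain ⟨y, rfl⟩ := hp x
    have : y ∈ (LinearMap.range h).comap p := by rw [h4]; trivial
    exact this
  have h5 := le_ker_pr H h3
  rw [← hk] at h5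
  intro x hx
  obtain ⟨y, rfl⟩ := hp x
  have h6 := h5 (show y ∈ (LinearMap.range h).comap p from hx)
  simpa [q, Submodule.Quotient.mk_eq_zero] using h6

lemma hom_P_zero {lam : Λ} (hl : IsMax lam) (h : H.P lam →ₗ[S] H.P lam)
    (hn : ¬ Function.Surjective h) : h = 0 := by
  obtain ⟨e⟩ := std_of_max H hl
  refine comp_eq_zero e.toLinearMap e.injective h (hom_std_zero H _ ?_)
  intro hs
  exact hn (Function.Surjective.of_comp_left hs e.injective)

lemma le_of_hom_P {mu lam : Λ} (hl : IsMax lam) (h : H.P mu →ₗ[S] H.P lam) (hh : h ≠ 0) :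
    mu ≤ lam := by
  obtain ⟨e⟩ := std_of_max H hl
  exact le_of_hom_std H (e.toLinearMap ∘ₗ h) fun h0 => hh (comp_eq_zero _ e.injective h h0)

/-- For minimal `mu`, the standard module is simple. -/
lemma std_of_min {mu : Λ} (hmu : IsMin mu) : Nonempty (H.std mu ≃ₗ[S] H.L mu) := by
  obtain ⟨A, hA, ⟨e⟩⟩ := std_rad H mu
  have : A = ⊥ := by
    by_contra hc
    have : Nontrivial A := Submodule.nontrivial_iff_ne_bot.2 hc
    obtain ⟨nu, h, hh⟩ := exists_hom H A
    have h1 : A.subtype ∘ₗ h ≠ 0 := fun h0 => hh (comp_eq_zero _ A.injective_subtype h h0)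
    have h2 : nu = mu := hmu.eq_of_le (le_of_hom_std H _ h1)
    subst h2
    apply h1
    apply hA
    rintro _ ⟨x, rfl⟩
    exact (h x).2
  exact ⟨(Submodule.quotEquivOfEqBot A this).symm.trans e⟩

/-- The radical of `P lam` is of X-type for nonminimal `lam`. -/
lemma XType_rad (hY : ∀ lam : Λ, ¬ IsMin lam → IsMax lam)
    {lam : Λ} (hl : ¬ IsMin lam) : XType H (LinearMap.ker (pr H lam)) := by
  intro nu hnu h
  by_contra hc
  have h1 : (LinearMap.ker (pr H lam)).subtype ∘ₗ h ≠ 0 :=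
    fun h0 => hc (comp_eq_zero _ (Submodule.injective_subtype _) h h0)
  have h2 : nu = lam := (hY nu hnu).eq_of_le (le_of_hom_P H (hY lam hl) _ h1)
  subst h2
  apply h1
  apply hom_P_zero H (hY _ hl)
  intro hs
  apply pr_ne H nu
  ext x
  obtain ⟨y, rfl⟩ := hs x
  exact (h y).2

/-- A nonzero map to `I lam` from any module hits the socle. -/
lemma hit_socle {lam : Λ} (h : M →ₗ[S] H.I lam) (hh : h ≠ 0) :
    ∃ t : H.P lam →ₗ[S] M, h ∘ₗ t = io H lam ∘ₗ pr H lam := by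
  have h1 : LinearMap.range (io H lam) ≤ LinearMap.range h := by
    have h2 : (LinearMap.range h).comap (io H lam) ≠ ⊥ := by
      intro h3
      apply hh
      rw [← LinearMap.range_eq_bot]
      apply io_ess
      rw [eq_bot_iff]
      rintro x ⟨hx, ⟨y, rfl⟩⟩
      have : y ∈ (LinearMap.range h).comap (io H lam) := hx
      rw [h3, Submodule.mem_bot] at this
      rw [this]
      simp
    have h4 := (eq_bot_or_eq_top ((LinearMap.range h).comap (io H lam))).resolve_left h2
    rintro _ ⟨y, rfl⟩
    have : y ∈ (LinearMap.range h).comap (io H lam) := by rw [h4]; trivial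
    exact this
  let r : H.P lam →ₗ[S] LinearMap.range h :=
    (io H lam ∘ₗ pr H lam).codRestrict _ (fun x => h1 ⟨pr H lam x, rfl⟩)
  obtain ⟨t, ht⟩ := lift H h.rangeRestrict h.surjective_rangeRestrict r
  refine ⟨t, ?_⟩
  ext x
  have := congrArg (fun f => (f x : H.I lam)) ht
  exact this

lemma io_pr_ne (lam : Λ) : io H lam ∘ₗ pr H lam ≠ 0 :=
  fun h0 => pr_ne H lam (comp_eq_zero _ (io_inj H lam) _ h0)

lemma hom_XType_I {lam : Λ} (hl : ¬ IsMin lam) (hM : XType H M) (h : M →ₗ[S] H.I lam) :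
    h = 0 := by
  by_contra hc
  obtain ⟨t, ht⟩ := hit_socle H h hc
  apply io_pr_ne H lam
  rw [← ht, hM lam hl t, LinearMap.comp_zero]

lemma hom_P_I (hY : ∀ lam : Λ, ¬ IsMin lam → IsMax lam)
    {nu lam : Λ} (hl : ¬ IsMin lam) (hnu : ¬ IsMin nu) (h : H.P nu →ₗ[S] H.I lam) :
    LinearMap.range h ≤ LinearMap.range (io H lam) := by
  by_cases hc : h = 0
  · rw [hc]; simp
  obtain ⟨t, ht⟩ := hit_socle H h hc
  have htn : t ≠ 0 := by
    intro h0
    apply io_pr_ne H lam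
    rw [← ht, h0, LinearMap.comp_zero]
  have h2 : lam = nu := (hY lam hl).eq_of_le (le_of_hom_P H (hY nu hnu) _ htn)
  subst h2
  have hs : Function.Surjective t := by
    by_contra hns
    exact htn (hom_P_zero H (hY _ hl) t hns)
  rintro _ ⟨x, rfl⟩
  obtain ⟨y, rfl⟩ := hs x
  exact ⟨pr H lam y, (congrArg (fun f => f y) ht).symm⟩

/-- For nonminimal `lam`, `I lam = costd lam`. -/
lemma costd_of_max (hY : ∀ lam : Λ, ¬ IsMin lam → IsMax lam)
    {lam : Λ} (hl : ¬ IsMin lam) : Nonempty (H.costd lam ≃ₗ[S] H.I lam) := by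
  obtain ⟨V, ⟨e⟩, -, hV⟩ := H.costdSpec lam
  have htop : V = ⊤ := by
    rw [eq_top_iff]
    apply hV
    intro mu hmu
    obtain ⟨h, hh⟩ := exists_of_factor H hmu
    have h1 : (⊤ : Submodule S (H.I lam)).subtype ∘ₗ h ≠ 0 :=
      fun h0 => hh (comp_eq_zero _ (Submodule.injective_subtype _) h h0)
    obtain ⟨t, ht⟩ := hit_socle H _ h1
    have htn : t ≠ 0 := by
      intro h0
      apply io_pr_ne H lam
      rw [← ht, h0, LinearMap.comp_zero]
    obtain ⟨n, f, g, ⟨hm, f0, f1, hs⟩, hg, -⟩ := H.projFilt mu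
    by_contra hle
    have hgn : ∀ i, g i ≠ lam := by
      intro i hi
      exact hle (hi ▸ hg i)
    have key : ∀ j : Fin (n + 1), LinearMap.range t ≤ f j → t = 0 := by
      intro j
      induction j using Fin.induction with
      | zero =>
        intro hr
        rw [f0, le_bot_iff, LinearMap.range_eq_bot] at hr
        exact hr
      | succ i ih =>
        intro hr
        apply ih
        let t' : H.P lam →ₗ[S] f i.succ := t.codRestrict _ (fun x => hr ⟨x, rfl⟩)
        obtain ⟨e⟩ := hs i
        change _ ≃ₗ[S] H.std (g i) at e
        have h3 : e.toLinearMap ∘ₗ (Submodule.mkQ _ ∘ₗ t') = 0 := by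
          by_contra h4
          have h5 := le_of_hom_std H _ h4
          exact hgn i ((hY lam hl).eq_of_le h5).symm
        have h6 := comp_eq_zero _ e.injective _ h3
        rintro _ ⟨x, rfl⟩
        have := congrArg (fun t => t x) h6
        simpa [t', Submodule.Quotient.mk_eq_zero] using this
    exact htn (key (Fin.last n) (by rw [f1]; exact le_top))
  exact ⟨e.trans (LinearEquiv.ofTop V htop)⟩

/-- For minimal `mu`, the costandard module is simple. -/
lemma costd_of_min {mu : Λ} (hmu : IsMin mu) : Nonempty (H.costd mu ≃ₗ[S] H.L mu) := by
  obtain ⟨V, ⟨e⟩, hV1, hV⟩ := H.costdSpec mu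
  have hle : LinearMap.range (io H mu) ≤ V := by
    apply hV
    intro nu hnu
    obtain ⟨h, hh⟩ := exists_of_factor H hnu
    let e2 := LinearEquiv.ofInjective (io H mu) (io_inj H mu)
    exact (head_eq H (e2.symm.toLinearMap ∘ₗ h)
      (fun h0 => hh (comp_eq_zero _ e2.symm.injective h h0))).le
  have hlift : ∀ (nu : Λ) (h : H.P nu →ₗ[S] V),
      LinearMap.range (V.subtype ∘ₗ h) ≤ LinearMap.range (io H mu) := by
    intro nu h
    by_cases hc : h = 0
    · rw [hc]; simp
    have hnm : nu = mu := hmu.eq_of_le (hV1 nu (factor_of H (M := ModuleCat.of S V) h hc))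
    subst hnm
    have hker : LinearMap.ker (pr H nu) ≤ LinearMap.ker h := by
      obtain ⟨K, ⟨eK⟩, hK1, hK⟩ := H.stdSpec nu
      obtain ⟨eL⟩ := std_of_min H hmu
      have hsK : IsSimpleModule S (H.P nu ⧸ K) := IsSimpleModule.congr (eK.symm.trans eL)
      have hKco : IsCoatom K := isSimpleModule_iff_isCoatom.1 hsK
      have h1 : K = LinearMap.ker (pr H nu) := by
        rcases hKco.le_iff.1 (le_ker_pr H hKco.1) with h | h
        · exact absurd h (ker_coatom (pr H nu) (pr_ne H nu)).1
        · exact h.symm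
      rw [← h1]
      apply hK
      intro kap hkap
      obtain ⟨g, hg⟩ := exists_of_factor H hkap
      let q : (H.P nu ⧸ LinearMap.ker h) →ₗ[S] V := (LinearMap.ker h).liftQ h le_rfl
      have hq : Function.Injective q := by
        rw [← LinearMap.ker_eq_bot]
        exact Submodule.ker_liftQ_eq_bot _ _ _ le_rfl
      exact hV1 kap (factor_of H (M := ModuleCat.of S V) (q ∘ₗ g)
        (fun h0 => hg (comp_eq_zero _ hq g h0)))
    obtain ⟨t, ht⟩ := hit_socle H (V.subtype ∘ₗ h)
      (fun h0 => hc (comp_eq_zero _ (Submodule.injective_subtype _) h h0))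
    have hs : Function.Surjective t := by
      apply surj_of
      intro h0
      apply io_pr_ne H nu
      rw [← ht]
      ext x
      have h1 : t x ∈ LinearMap.ker (pr H nu) :=
        (congrArg (fun f => f x) h0 : (pr H nu ∘ₗ t) x = 0)
      have h2 : h (t x) = 0 := hker h1
      simp [h2]
    rintro _ ⟨x, rfl⟩
    obtain ⟨y, rfl⟩ := hs x
    exact ⟨pr H nu y, (congrArg (fun f => f y) ht).symm⟩
  have heq : V = LinearMap.range (io H mu) := by
    refine le_antisymm ?_ hle
    by_contra hc
    have hne : Submodule.comap V.subtype (LinearMap.range (io H mu)) ≠ ⊤ := by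
      intro h
      apply hc
      rwa [Submodule.comap_subtype_eq_top] at h
    have : Nontrivial (V ⧸ Submodule.comap V.subtype (LinearMap.range (io H mu))) :=
      Submodule.Quotient.nontrivial_iff.2 hne
    obtain ⟨nu, h, hh⟩ := exists_hom H (V ⧸ Submodule.comap V.subtype (LinearMap.range (io H mu)))
    obtain ⟨t, ht⟩ := lift H (Submodule.mkQ _) (Submodule.mkQ_surjective _) h
    apply hh
    rw [← ht]
    ext x
    simp only [LinearMap.comp_apply, Submodule.mkQ_apply, LinearMap.zero_apply,
      Submodule.Quotient.mk_eq_zero, Submodule.mem_comap]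
    exact hlift nu t ⟨x, rfl⟩
  exact ⟨(e.trans (LinearEquiv.ofEq _ _ heq)).trans
    (LinearEquiv.ofInjective (io H mu) (io_inj H mu)).symm⟩

/-- Resolution of the simple modules of minimal weight. -/
lemma res_min (hY : ∀ lam : Λ, ¬ IsMin lam → IsMax lam)
    {mu : Λ} (hmu : IsMin mu) : ∃ K : Submodule S (H.P mu),
    Module.Projective S K ∧ Nonempty ((H.P mu ⧸ K) ≃ₗ[S] H.L mu) := by
  obtain ⟨n, f, g, ⟨hm, f0, f1, hs⟩, hg, hcard⟩ := H.projFilt mu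
  obtain _ | n := n
  · exfalso
    have h1 : (⊤ : Submodule S (H.P mu)) = ⊥ := by rw [← f0, ← f1]; rfl
    apply pr_ne H mu
    ext x
    have hx : x ∈ (⊤ : Submodule S (H.P mu)) := trivial
    rw [h1, Submodule.mem_bot] at hx
    rw [hx]
    simp
  have htop : f (Fin.last n).succ = ⊤ := f1
  obtain ⟨e⟩ := hs (Fin.last n)
  change _ ≃ₗ[S] H.std (g (Fin.last n)) at e
  set K := f (Fin.last n).castSucc with hK
  have e1 : Nonempty ((H.P mu ⧸ K) ≃ₗ[S] subquot S K (f (Fin.last n).succ)) := by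
    refine ⟨(Submodule.Quotient.equiv _ _ (LinearEquiv.ofTop _ htop) ?_).symm⟩
    ext x
    constructor
    · rintro ⟨y, hy, rfl⟩
      exact hy
    · intro hx
      exact ⟨⟨x, by rw [htop]; trivial⟩, hx, rfl⟩
  obtain ⟨e1⟩ := e1
  have hgl : g (Fin.last n) = mu := by
    obtain ⟨A, -, ⟨eA⟩⟩ := std_rad H (g (Fin.last n))
    symm
    let q : H.P mu →ₗ[S] H.L (g (Fin.last n)) :=
      eA.toLinearMap ∘ₗ A.mkQ ∘ₗ e.toLinearMap ∘ₗ e1.toLinearMap ∘ₗ K.mkQ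
    have hq : Function.Surjective q := eA.surjective.comp ((Submodule.mkQ_surjective _).comp
      (e.surjective.comp (e1.surjective.comp (Submodule.mkQ_surjective _))))
    apply head_eq H q
    intro h0
    have : Nontrivial (H.L (g (Fin.last n))) := IsSimpleModule.nontrivial S _
    obtain ⟨x, hx⟩ := exists_ne (0 : H.L (g (Fin.last n)))
    obtain ⟨y, rfl⟩ := hq x
    exact hx (by rw [h0]; rfl)
  rw [hgl] at e
  obtain ⟨eL⟩ := std_of_min H hmu
  refine ⟨K, ?_, ⟨(e1.trans e).trans eL⟩⟩
  rw [Nat.card_eq_one_iff_unique] at hcard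
  obtain ⟨hsub, -⟩ := hcard
  have key : ∀ j : Fin (n + 2), j ≤ (Fin.last n).castSucc → Module.Projective S (f j) := by
    intro j
    induction j using Fin.induction with
    | zero =>
      intro _
      rw [f0]
      infer_instance
    | succ i ih =>
      intro hi
      have hlt : i < Fin.last n := by
        rw [Fin.le_def] at hi
        rw [Fin.lt_def]
        simp at hi ⊢
        omega
      have hP := ih (Fin.castSucc_le_castSucc_iff.2 hlt.le)
      have hgi : g i ≠ mu := by
        intro h
        exact hlt.ne (congrArg Subtype.val (hsub.elim ⟨i, h⟩ ⟨Fin.last n, hgl⟩))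
      have hlt2 : mu < g i := lt_of_le_of_ne (hg i) (Ne.symm hgi)
      obtain ⟨e3⟩ := std_of_max H (hY (g i) hlt2.not_isMin)
      obtain ⟨e4⟩ := hs i
      change _ ≃ₗ[S] H.std (g i) at e4
      let C := Submodule.comap (f i.succ).subtype (f i.castSucc)
      have hPQ : Module.Projective S (f i.succ ⧸ C) :=
        Module.Projective.of_equiv (e3.trans e4.symm)
      have hPC : Module.Projective S C :=
        Module.Projective.of_equiv
          (Submodule.comapSubtypeEquivOfLe (hm (Fin.castSucc_lt_succ (i := i)).le)).symm
      obtain ⟨s, hs'⟩ := Module.projective_lifting_property C.mkQ LinearMap.id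
        (Submodule.mkQ_surjective _)
      let φ : (C × (f i.succ ⧸ C)) →ₗ[S] f i.succ := LinearMap.coprod C.subtype s
      have hφ : Function.Bijective φ := by
        have hsx : ∀ x, C.mkQ (s x) = x := fun x => congrArg (fun f => f x) hs'
        constructor
        · rw [← LinearMap.ker_eq_bot, LinearMap.ker_eq_bot']
          rintro ⟨c, x⟩ hx
          have hx' : (c : f i.succ) + s x = 0 := hx
          have h1 : C.mkQ ((c : f i.succ) + s x) = 0 := by rw [hx', map_zero]
          have h2 : x = 0 := by
            rw [map_add, hsx, show C.mkQ (c : f i.succ) = 0 from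
              (Submodule.Quotient.mk_eq_zero C).2 c.2, zero_add] at h1
            exact h1
          subst h2
          simp at hx'
          ext1
          · simpa using hx'
          · rfl
        · intro y
          have hm : y - s (C.mkQ y) ∈ C := by
            rw [← Submodule.Quotient.mk_eq_zero, ← Submodule.mkQ_apply, map_sub, hsx, sub_self]
          refine ⟨(⟨_, hm⟩, C.mkQ y), ?_⟩
          simp [φ]
      exact Module.Projective.of_equiv (LinearEquiv.ofBijective φ hφ)
  exact key _ le_rfl

end QHProof

end PartB

section PartC

namespace QHProof
open QHPaper

variable {S : Type} [Ring S] {Λ : Type} [Fintype Λ] [PartialOrder Λ] (H : QHData S Λ)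
variable {A B M N : Type} [AddCommGroup A] [Module S A] [AddCommGroup B] [Module S B]
  [AddCommGroup M] [Module S M] [AddCommGroup N] [Module S N]

/-- Inductive form of having a costandard filtration. -/
inductive Fil : ∀ (M : Type) [AddCommGroup M] [Module S M], Prop
  | zero {M : Type} [AddCommGroup M] [Module S M] [Subsingleton M] : Fil M
  | ext {M : Type} [AddCommGroup M] [Module S M] {N : Submodule S M} {lam : Λ}
      (e : (M ⧸ N) ≃ₗ[S] H.costd lam) : Fil N → Fil M

variable {H}

lemma Fil.congr (hM : Fil H M) : ∀ {N : Type} [AddCommGroup N] [Module S N],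
    (M ≃ₗ[S] N) → Fil H N := by
  induction hM with
  | @zero M _ _ _ =>
    intro N _ _ e
    have := e.symm.toEquiv.subsingleton
    exact .zero
  | @ext M _ _ A lam e0 _ ih =>
    intro N _ _ e
    exact .ext ((Submodule.Quotient.equiv A (A.map e.toLinearMap) e rfl).symm.trans e0)
      (ih (e.submoduleMap A))

lemma Fil.extn {C : Type} [AddCommGroup C] [Module S C] (hC : Fil H C) :
    ∀ {M : Type} [AddCommGroup M] [Module S M] (g : M →ₗ[S] C), Function.Surjective g →
      Fil H (LinearMap.ker g) → Fil H M := by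
  induction hC with
  | @zero C _ _ _ =>
    intro M _ _ g hg hk
    refine hk.congr (LinearEquiv.ofTop _ ?_)
    rw [eq_top_iff]
    intro x _
    exact Subsingleton.elim _ _
  | @ext C _ _ A lam e0 _ ih =>
    intro M _ _ g hg hk
    let q : M →ₗ[S] C ⧸ A := A.mkQ ∘ₗ g
    have hq : Function.Surjective q := (Submodule.mkQ_surjective _).comp hg
    have hmem : ∀ x : LinearMap.ker q, g x ∈ A := by
      rintro ⟨x, hx⟩
      exact (Submodule.Quotient.mk_eq_zero A).1 hx
    refine .ext (N := LinearMap.ker q) ((q.quotKerEquivOfSurjective hq).trans e0) ?_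
    let g' : LinearMap.ker q →ₗ[S] A :=
      (g ∘ₗ (LinearMap.ker q).subtype).codRestrict A hmem
    refine ih g' ?_ ?_
    · rintro ⟨a, ha⟩
      obtain ⟨x, rfl⟩ := hg a
      exact ⟨⟨x, (Submodule.Quotient.mk_eq_zero A).2 ha⟩, rfl⟩
    · refine hk.congr (LinearEquiv.ofBijective
        (((Submodule.inclusion (fun x hx => ?_ : LinearMap.ker g ≤ LinearMap.ker q))).codRestrict
          (LinearMap.ker g') (fun x => ?_)) ⟨?_, ?_⟩)
      · have : g x = 0 := hx
        simp [q, this]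
      · apply Subtype.ext
        exact x.2
      · intro x y hxy
        have := congrArg (fun t : LinearMap.ker g' => ((t : LinearMap.ker q) : M)) hxy
        exact Subtype.ext this
      · rintro ⟨⟨x, hx⟩, hx'⟩
        exact ⟨⟨x, congrArg Subtype.val hx'⟩, rfl⟩

lemma Fil.costd (lam : Λ) : Fil H (H.costd lam) :=
  .ext (N := ⊥) (Submodule.quotEquivOfEqBot _ rfl) .zero

lemma Fil.prod (hM : Fil H M) (hN : Fil H N) : Fil H (M × N) := by
  refine hN.extn (LinearMap.snd S M N) Prod.snd_surjective ?_
  refine hM.congr (LinearEquiv.ofBijective ((LinearMap.inl S M N).codRestrict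
    (LinearMap.ker (LinearMap.snd S M N)) (fun x => rfl)) ⟨?_, ?_⟩)
  · intro x y h
    exact congrArg (fun t : LinearMap.ker (LinearMap.snd S M N) => (t : M × N).1) h
  · rintro ⟨⟨x, y⟩, hy⟩
    refine ⟨x, Subtype.ext ?_⟩
    have : y = 0 := hy
    subst this
    rfl

lemma subq_map (N : Submodule S M) (A B : Submodule S N) :
    Nonempty ((B ⧸ A.comap B.subtype) ≃ₗ[S]
      (↥(B.map N.subtype) ⧸ (A.map N.subtype).comap (B.map N.subtype).subtype)) := by
  refine ⟨Submodule.Quotient.equiv _ _ (Submodule.equivSubtypeMap N B) ?_⟩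
  ext x
  constructor
  · rintro ⟨y, hy, rfl⟩
    exact ⟨y, hy, rfl⟩
  · rintro ⟨y, hy, hxy⟩
    obtain ⟨_, ⟨z, hz, rfl⟩⟩ := x
    have h1 : y = z := Subtype.ext hxy
    subst h1
    exact ⟨⟨y, hz⟩, hy, rfl⟩

lemma Fil.filt (hM : Fil H M) : InCostdFilt S H (ModuleCat.of S M) := by
  induction hM with
  | @zero M _ _ _ =>
    refine ⟨0, fun _ => ⊥, Fin.elim0, fun _ _ _ => le_rfl, rfl, ?_, fun i => i.elim0⟩
    exact Subsingleton.elim _ _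
  | @ext M _ _ N lam e _ ih =>
    obtain ⟨n, f, g, hm, f0, f1, hs⟩ := ih
    let F : Fin (n + 2) → Submodule S M :=
      Fin.snoc (α := fun _ => Submodule S M) (fun i => (f i).map N.subtype) ⊤
    have F1 : ∀ i : Fin (n + 1), F i.castSucc = (f i).map N.subtype := fun i => by
      simp [F]
    have F2 : F (Fin.last (n + 1)) = ⊤ := by simp [F]
    let G : Fin (n + 1) → Λ := Fin.snoc (α := fun _ => Λ) g lam
    have G1 : ∀ i : Fin n, G i.castSucc = g i := fun i => by
      simp [G]
    have G2 : G (Fin.last n) = lam := by simp [G]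
    refine ⟨n + 1, F, G, ?_, ?_, F2, ?_⟩
    · refine Fin.monotone_iff_le_succ.2 fun i => ?_
      induction i using Fin.lastCases with
      | last =>
        rw [Fin.succ_last, F2]
        exact le_top
      | cast i =>
        rw [← Fin.castSucc_succ, F1, F1]
        exact Submodule.map_mono (hm (Fin.castSucc_lt_succ (i := i)).le)
    · have := F1 0
      rw [f0] at this
      simpa using this
    · intro i
      induction i using Fin.lastCases with
      | last =>
        have h1 : F (Fin.last n).castSucc = N := by
          rw [F1, f1]
          simp
        have h2 : F (Fin.last n).succ = ⊤ := by
          rw [Fin.succ_last, F2]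
        rw [h1, h2]
        change Nonempty (_ ≃ₗ[S] H.costd (G (Fin.last n)))
        rw [G2]
        refine ⟨(Submodule.Quotient.equiv _ _ Submodule.topEquiv ?_).trans e⟩
        ext x
        constructor
        · rintro ⟨y, hy, rfl⟩
          exact hy
        · intro hx
          exact ⟨⟨x, trivial⟩, hx, rfl⟩
      | cast i =>
        rw [← Fin.castSucc_succ, F1, F1]
        change Nonempty (_ ≃ₗ[S] H.costd (G i.castSucc))
        rw [G1]
        obtain ⟨e1⟩ := hs i
        obtain ⟨e2⟩ := subq_map N (f i.castSucc) (f i.succ)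
        exact ⟨e2.symm.trans e1⟩

lemma Fil.gfd (hM : Fil H M) : gfd S H (ModuleCat.of S M) = 0 := by
  have : GfdLE S H (ModuleCat.of S M) 0 := by
    refine ⟨fun _ => ModuleCat.of S M, fun _ => LinearMap.id, ⟨?_, ?_, fun i => i.elim0⟩, rfl,
      fun _ => hM.filt⟩
    · exact Function.injective_id
    · exact Function.surjective_id
  exact Nat.le_zero.1 (Nat.sInf_le this)

lemma Fil.of_XType (hM : IsFiniteLength S M) (hX : XType H M) : Fil H M := by
  induction hM with
  | of_subsingleton => exact .zero
  | @of_simple_quotient M _ _ N hs _ ih =>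
    obtain ⟨lam, ⟨e⟩⟩ := H.fullL (ModuleCat.of S (M ⧸ N)) hs
    have hl : IsMin lam := by
      by_contra hc
      have h1 : XType H (M ⧸ N) := XType.of_surj H N.mkQ (Submodule.mkQ_surjective _) hX
      have h2 := h1 lam hc (e.symm.toLinearMap ∘ₗ pr H lam)
      exact pr_ne H lam (comp_eq_zero _ e.symm.injective _ h2)
    obtain ⟨e2⟩ := costd_of_min H hl
    exact .ext ((e : (M ⧸ N) ≃ₗ[S] H.L lam).trans e2.symm)
      (ih (XType.of_inj H N.subtype N.injective_subtype hX))

variable (H)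

/-- The injective hulls are finite dimensional. -/
lemma finite_I (k : Type) [Field k] [Algebra k S] [FiniteDimensional k S] (lam : Λ) :
    Module.Finite S (H.I lam) := by
  let _ : Module k (H.I lam) := Module.compHom (H.I lam) (algebraMap k S)
  have : IsScalarTower k S (H.I lam) := ⟨fun a s x => by
    change (a • s) • x = algebraMap k S a • s • x
    rw [Algebra.smul_def, mul_smul]⟩
  have : Nontrivial (H.L lam) := IsSimpleModule.nontrivial S _
  obtain ⟨x, hx⟩ := exists_ne (0 : H.L lam)
  have hx' : io H lam x ≠ 0 := fun h => hx (io_inj H lam (by rw [h, map_zero]))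
  obtain ⟨θ, hθ⟩ : ∃ θ : H.I lam →ₗ[k] k, θ (io H lam x) ≠ 0 := by
    by_contra! hc
    exact hx' ((Module.forall_dual_apply_eq_zero_iff k _).1 hc)
  let Φ : H.I lam →ₗ[k] (S →ₗ[k] k) :=
    { toFun := fun m => θ ∘ₗ (LinearMap.toSpanSingleton S (H.I lam) m).restrictScalars k
      map_add' := fun a b => by ext s; simp
      map_smul' := fun c a => by
        ext s
        have : s • c • a = c • s • a := smul_comm s c a
        simp [this] }
  have hΦ : ∀ m s, Φ m s = θ (s • m) := fun m s => rfl
  let K : Submodule S (H.I lam) :=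
    { carrier := {m | ∀ s : S, θ (s • m) = 0}
      add_mem' := fun {a b} ha hb s => by rw [smul_add, map_add, ha s, hb s, add_zero]
      zero_mem' := fun s => by simp
      smul_mem' := fun c m hm s => by rw [← mul_smul]; exact hm _ }
  have hK : K = ⊥ := by
    apply io_ess
    have h1 : K.comap (io H lam) = ⊥ := by
      refine (eq_bot_or_eq_top _).resolve_right fun h => hθ ?_
      have h2 : x ∈ K.comap (io H lam) := by rw [h]; trivial
      have h3 := h2 1
      rwa [one_smul] at h3
    rw [eq_bot_iff]
    rintro _ ⟨hy, ⟨y, rfl⟩⟩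
    have h2 : y ∈ K.comap (io H lam) := hy
    rw [h1, Submodule.mem_bot] at h2
    simp [h2]
  have hinj : Function.Injective Φ := by
    rw [← LinearMap.ker_eq_bot, LinearMap.ker_eq_bot']
    intro m hm
    have : m ∈ K := fun s => by rw [← hΦ, hm]; rfl
    rwa [hK, Submodule.mem_bot] at this
  have : Module.Finite k (H.I lam) := Module.Finite.of_injective Φ hinj
  exact Module.Finite.of_restrictScalars_finite k S _

/-- The approximation of a finite length module by an injective module with costandard
filtration. -/
lemma approx (hY : ∀ lam : Λ, ¬ IsMin lam → IsMax lam)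
    (hfin : ∀ lam, Module.Finite S (H.I lam)) (hM : IsFiniteLength S M) :
    ∃ (G : Type) (_ : AddCommGroup G) (_ : Module S G) (f : M →ₗ[S] G),
      Module.Finite S G ∧ Module.Injective S G ∧ Fil H G ∧
      (∀ (X : Type) [AddCommGroup X] [Module S X], XType H X → ∀ h : X →ₗ[S] G, h = 0) ∧
      (∀ nu, ¬ IsMin nu → ∀ h : H.P nu →ₗ[S] M, f ∘ₗ h = 0 → h = 0) ∧
      (∀ nu, ¬ IsMin nu → ∀ h : H.P nu →ₗ[S] G, LinearMap.range h ≤ LinearMap.range f) := by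
  induction hM with
  | @of_subsingleton M _ _ _ =>
    refine ⟨PUnit, inferInstance, inferInstance, 0, inferInstance, ?_, .zero, ?_, ?_, ?_⟩
    · exact ⟨fun X Y _ _ _ _ f hf g => ⟨0, fun x => rfl⟩⟩
    · intro X _ _ _ h
      ext x
    · intro nu _ h _
      ext x
      exact Subsingleton.elim _ _
    · rintro nu _ h _ ⟨x, rfl⟩
      exact ⟨0, rfl⟩
  | @of_simple_quotient M _ _ N hs _ ih =>
    obtain ⟨G, _, _, f', hGf, hGi, hGF, hGX, hk, hc⟩ := ih
    obtain ⟨f1, hf1⟩ := hGi.out N.subtype N.injective_subtype f'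
    obtain ⟨lam, ⟨e⟩⟩ := H.fullL (ModuleCat.of S (M ⧸ N)) hs
    change (M ⧸ N) ≃ₗ[S] H.L lam at e
    let q : M →ₗ[S] H.L lam := e.toLinearMap ∘ₗ N.mkQ
    have hq : Function.Surjective q := e.surjective.comp (Submodule.mkQ_surjective _)
    have hqN : ∀ x, q x = 0 → x ∈ N := fun x hx => by
      simpa [q, Submodule.Quotient.mk_eq_zero] using hx
    have hkey : ∀ nu, ¬ IsMin nu → ∀ h : H.P nu →ₗ[S] M, q ∘ₗ h = 0 → f1 ∘ₗ h = 0 → h = 0 := by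
      intro nu hnu h h1 h2
      let h' : H.P nu →ₗ[S] N := h.codRestrict N (fun x => hqN _ (congrArg (fun t => t x) h1))
      have h3 : h' = 0 := by
        apply hk nu hnu
        ext x
        rw [LinearMap.comp_apply, ← hf1]
        exact congrArg (fun t => t x) h2
      ext x
      exact congrArg (fun t => ((t x : N) : M)) h3
    have hr' : LinearMap.range f' ≤ LinearMap.range f1 := by
      rintro _ ⟨x, rfl⟩
      exact ⟨x, hf1 x⟩
    by_cases hl : IsMin lam
    · refine ⟨G, inferInstance, inferInstance, f1, hGf, hGi, hGF, hGX, ?_, ?_⟩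
      · intro nu hnu h h0
        exact hkey nu hnu h (XType_L H hl nu hnu _) h0
      · intro nu hnu h
        exact (hc nu hnu h).trans hr'
    · let f : M →ₗ[S] (G × H.I lam) := f1.prod (io H lam ∘ₗ q)
      refine ⟨G × H.I lam, inferInstance, inferInstance, f, ?_, ?_, ?_, ?_, ?_, ?_⟩
      · have := hfin lam
        infer_instance
      · constructor
        intro X Y _ _ _ _ a ha b
        obtain ⟨u, hu⟩ := hGi.out a ha (LinearMap.fst S _ _ ∘ₗ b)
        obtain ⟨v, hv⟩ := (instInjI H lam).out a ha (LinearMap.snd S _ _ ∘ₗ b)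
        exact ⟨u.prod v, fun x => Prod.ext (hu x) (hv x)⟩
      · obtain ⟨e2⟩ := costd_of_max H hY hl
        exact hGF.prod ((Fil.costd lam).congr e2)
      · intro X _ _ hX h
        have h1 := hGX X hX (LinearMap.fst S _ _ ∘ₗ h)
        have h2 := hom_XType_I H hl hX (LinearMap.snd S _ _ ∘ₗ h)
        refine LinearMap.ext fun x => Prod.ext ?_ ?_
        · exact congrArg (fun t => t x) h1
        · exact congrArg (fun t => t x) h2
      · intro nu hnu h h0
        apply hkey nu hnu h
        · refine comp_eq_zero _ (io_inj H lam) _ ?_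
          ext x
          exact congrArg (fun t => (t x).2) h0
        · ext x
          exact congrArg (fun t => (t x).1) h0
      · intro nu hnu h
        have h2 := hom_P_I H hY hl hnu (LinearMap.snd S _ _ ∘ₗ h)
        let e2 := LinearEquiv.ofInjective (io H lam) (io_inj H lam)
        let h2' : H.P nu →ₗ[S] LinearMap.range (io H lam) :=
          (LinearMap.snd S _ _ ∘ₗ h).codRestrict _ (fun x => h2 ⟨x, rfl⟩)
        obtain ⟨u, hu⟩ := lift H q hq (e2.symm.toLinearMap ∘ₗ h2')
        have hu' : ∀ x, io H lam (q (u x)) = (h x).2 := by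
          intro x
          have h3 : q (u x) = e2.symm (h2' x) := congrArg (fun t => t x) hu
          have h4 : e2 (q (u x)) = h2' x := by rw [h3]; simp
          exact congrArg Subtype.val h4
        have h5 := hc nu hnu (LinearMap.fst S _ _ ∘ₗ h - f1 ∘ₗ u)
        rintro _ ⟨x, rfl⟩
        obtain ⟨y, hy⟩ := h5 ⟨x, rfl⟩
        have hy' : f1 y = (h x).1 - f1 (u x) := (hf1 y).trans hy
        refine ⟨y + u x, Prod.ext ?_ ?_⟩
        · change f1 (y + u x) = _
          rw [map_add, hy', sub_add_cancel]
        · change io H lam (q (y + u x)) = _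
          have : q y = 0 := by simp [q]
          rw [map_add, this, zero_add, hu']

end QHProof

end PartC

section PartD

namespace QHProof
open QHPaper

variable {S : Type} [Ring S] {Λ : Type} [Fintype Λ] [PartialOrder Λ] (H : QHData S Λ)
variable {A B M N : Type} [AddCommGroup A] [Module S A] [AddCommGroup B] [Module S B]
  [AddCommGroup M] [Module S M] [AddCommGroup N] [Module S N]

/-- Comparison of the two versions of `Ext²`. -/
lemma extNe_of_ne {X Y : ModuleCat.{0} S} (α : Abelian.Ext.{0} X Y 2) (hα : α ≠ 0) :
    extNe S X Y 2 := by
  by_contra hc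
  have hsub : Subsingleton (((Ext ℤ (ModuleCat.{0} S) 2).obj (Opposite.op X)).obj Y) :=
    not_nontrivial_iff_subsingleton.1 hc
  apply hα
  let R := ProjectiveResolution.of X
  have hz : Limits.IsZero ((R.complex.linearYonedaObj ℤ Y).homology 2) :=
    (ModuleCat.isZero_of_subsingleton _).of_iso (R.isoExt (R := ℤ) 2 Y).symm
  rw [← HomologicalComplex.exactAt_iff_isZero_homology,
    HomologicalComplex.exactAt_iff' _ 1 2 3 (by simp) (by simp),
    ShortComplex.moduleCat_exact_iff] at hz
  obtain ⟨f, hf, rfl⟩ := R.extMk_surjective α 3 rfl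
  rw [R.extMk_eq_zero_iff f 3 rfl hf 1 rfl]
  exact hz f hf

/-- Projective dimension bounds, unbundled. -/
abbrev PD (S : Type) [Ring S] (M : Type) [AddCommGroup M] [Module S M] (n : ℕ) : Prop :=
  HasProjectiveDimensionLT (ModuleCat.of S M) n

lemma PD.congr {n : ℕ} (h : PD S M n) (e : M ≃ₗ[S] N) : PD S N n :=
  hasProjectiveDimensionLT_of_iso e.toModuleIso n

lemma PD.sub_zero (n : ℕ) [Subsingleton M] : PD S M n :=
  have := (ModuleCat.isZero_of_subsingleton (ModuleCat.of S M)).hasProjectiveDimensionLT_zero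
  hasProjectiveDimensionLT_of_ge (ModuleCat.of S M) 0 n (Nat.zero_le _)

lemma PD.proj [Module.Projective S M] (n : ℕ) : PD S M (n + 1) := by
  have h1 : Projective (ModuleCat.of S M) := (IsProjective.iff_projective M).1 inferInstance
  have := projective_iff_hasProjectiveDimensionLT_one.1 h1
  exact hasProjectiveDimensionLT_of_ge (ModuleCat.of S M) 1 (n + 1) (by lia)

lemma PD.ext {n : ℕ} (g : M →ₗ[S] N) (hg : Function.Surjective g)
    (h1 : PD S (LinearMap.ker g) n) (h3 : PD S N n) : PD S M n :=
  (LinearMap.shortExact_shortComplexKer hg).hasProjectiveDimensionLT_X₂ n h1 h3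

lemma PD.quot {n : ℕ} (g : M →ₗ[S] N) (hg : Function.Surjective g)
    (h1 : PD S (LinearMap.ker g) n) (h3 : PD S M (n + 1)) : PD S N (n + 1) :=
  (LinearMap.shortExact_shortComplexKer hg).hasProjectiveDimensionLT_X₃ n h1 h3

lemma PD.of_quot {n : ℕ} (K : Submodule S M) (h1 : PD S K n) (h3 : PD S (M ⧸ K) n) :
    PD S M n :=
  PD.ext K.mkQ (Submodule.mkQ_surjective _)
    (h1.congr (LinearEquiv.ofEq _ _ (Submodule.ker_mkQ K).symm)) h3

lemma PD_L_min (hY : ∀ lam : Λ, ¬ IsMin lam → IsMax lam) {mu : Λ} (hmu : IsMin mu) :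
    PD S (H.L mu) 2 := by
  obtain ⟨K, hK, ⟨e⟩⟩ := res_min H hY hmu
  refine PD.congr (M := H.P mu ⧸ K) ?_ e
  refine PD.quot K.mkQ (Submodule.mkQ_surjective _) ?_ (PD.proj _)
  exact (PD.proj (M := K) 0).congr (LinearEquiv.ofEq _ _ (Submodule.ker_mkQ K).symm)

lemma min_of_simple_quot (hX : XType H M) {K : Submodule S M} {lam : Λ}
    (e : (M ⧸ K) ≃ₗ[S] H.L lam) : IsMin lam := by
  by_contra hc
  have h1 : XType H (M ⧸ K) := XType.of_surj H K.mkQ (Submodule.mkQ_surjective _) hX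
  have h2 := h1 lam hc (e.symm.toLinearMap ∘ₗ pr H lam)
  exact pr_ne H lam (comp_eq_zero _ e.symm.injective _ h2)

lemma PD_XType (hY : ∀ lam : Λ, ¬ IsMin lam → IsMax lam) (hM : IsFiniteLength S M)
    (hX : XType H M) : PD S M 2 := by
  induction hM with
  | of_subsingleton => exact PD.sub_zero 2
  | @of_simple_quotient M _ _ N hs _ ih =>
    obtain ⟨lam, ⟨e⟩⟩ := H.fullL (ModuleCat.of S (M ⧸ N)) hs
    change (M ⧸ N) ≃ₗ[S] H.L lam at e
    exact PD.of_quot N (ih (XType.of_inj H N.subtype N.injective_subtype hX))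
      ((PD_L_min H hY (min_of_simple_quot H hX e)).congr e.symm)

lemma finite_P (lam : Λ) : Module.Finite S (H.P lam) := by
  have : Nontrivial (H.L lam) := IsSimpleModule.nontrivial S _
  obtain ⟨y, hy⟩ := exists_ne (0 : H.L lam)
  obtain ⟨x, rfl⟩ := pr_surj H lam y
  have h : Submodule.span S {x} = ⊤ := by
    by_contra hc
    exact hy (le_ker_pr H hc (Submodule.mem_span_singleton_self x))
  exact ⟨⟨{x}, by simpa using h⟩⟩

lemma PD_all (H : QHData S Λ) [IsArtinianRing S] (hY : ∀ lam : Λ, ¬ IsMin lam → IsMax lam)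
    (hM : IsFiniteLength S M) : PD S M 3 := by
  induction hM with
  | of_subsingleton => exact PD.sub_zero 3
  | @of_simple_quotient M _ _ N hs _ ih =>
    obtain ⟨lam, ⟨e⟩⟩ := H.fullL (ModuleCat.of S (M ⧸ N)) hs
    change (M ⧸ N) ≃ₗ[S] H.L lam at e
    refine PD.of_quot N ih (PD.congr ?_ e.symm)
    by_cases hl : IsMin lam
    · have := PD_L_min H hY hl
      exact hasProjectiveDimensionLT_of_ge (ModuleCat.of S (H.L lam)) 2 3 (by lia)
    · have := finite_P H lam
      refine PD.quot (pr H lam) (pr_surj H lam) ?_ (PD.proj _)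
      refine PD_XType H hY ?_ (XType_rad H hY hl)
      rw [isFiniteLength_iff_isNoetherian_isArtinian]
      constructor <;> infer_instance

end QHProof

end PartD

section PartE

namespace QHProof
open QHPaper

variable {S : Type} [Ring S] {Λ : Type} [Fintype Λ] [PartialOrder Λ] {H : QHData S Λ}
  (d : Duality S H)

lemma D_surj [IsNoetherianRing S] {X Y : ModuleCat.{0} S} (hX : Module.Finite S X)
    (hY : Module.Finite S Y)
    (f : X →ₗ[S] Y) (hf : Function.Injective f) : Function.Surjective (d.Dmap f) := by
  refine (d.Dexact (C := ModuleCat.of S (Y ⧸ LinearMap.range f)) hX hY ?_ f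
    (LinearMap.range f).mkQ hf (Submodule.mkQ_surjective _) (Submodule.ker_mkQ _).symm).2.1
  change Module.Finite S (Y ⧸ LinearMap.range f)
  infer_instance

lemma D_inj [IsNoetherianRing S] {X Y : ModuleCat.{0} S} (hX : Module.Finite S X)
    (hY : Module.Finite S Y)
    (f : X →ₗ[S] Y) (hf : Function.Surjective f) : Function.Injective (d.Dmap f) := by
  refine (d.Dexact (A := ModuleCat.of S (LinearMap.ker f)) ?_ hX hY (LinearMap.ker f).subtype
    f (Submodule.injective_subtype _) hf (Submodule.range_subtype _)).1
  change Module.Finite S (LinearMap.ker f)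
  infer_instance

lemma D_map_zero {X Y : ModuleCat.{0} S} (hX : Module.Finite S X)
    (hY : Module.Finite S Y) : d.Dmap (0 : X →ₗ[S] Y) = 0 := by
  have := d.Dadd hX hY 0 0
  rw [add_zero] at this
  exact left_eq_add.1 this

lemma D_XType [IsNoetherianRing S] {X : ModuleCat.{0} S} (hfin : Module.Finite S X)
    (hX : XType H X) : XType H (d.D X) := by
  intro nu hnu h
  by_contra hc
  have hDX := d.finD X hfin
  let Z : ModuleCat.{0} S := ModuleCat.of S (LinearMap.range h)
  have hZ : Module.Finite S Z := by
    change Module.Finite S (LinearMap.range h)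
    infer_instance
  let q : Z →ₗ[S] H.L nu := (LinearMap.ker h).liftQ (pr H nu) (ker_le_of_ne H h hc) ∘ₗ
    h.quotKerEquivRange.symm.toLinearMap
  have hq : Function.Surjective q := by
    intro y
    obtain ⟨x, rfl⟩ := pr_surj H nu y
    refine ⟨h.quotKerEquivRange (Submodule.Quotient.mk x), ?_⟩
    change (LinearMap.ker h).liftQ (pr H nu) (ker_le_of_ne H h hc)
      (h.quotKerEquivRange.symm (h.quotKerEquivRange (Submodule.Quotient.mk x))) = _
    rw [LinearEquiv.symm_apply_apply]
    rfl
  let i : Z →ₗ[S] d.D X := (LinearMap.range h).subtype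
  have h1 := D_surj d hZ hDX i (Submodule.injective_subtype _)
  have h2 := D_inj d hZ (H.finiteL nu) q hq
  obtain ⟨e⟩ := d.Dinvol X hfin
  obtain ⟨e0⟩ := d.DL nu
  obtain ⟨t, ht⟩ := lift H (d.Dmap i ∘ₗ e.symm.toLinearMap) (h1.comp e.symm.surjective)
    ((d.Dmap q ∘ₗ e0.symm.toLinearMap) ∘ₗ pr H nu)
  rw [hX nu hnu t, LinearMap.comp_zero] at ht
  have h3 : Function.Injective (d.Dmap q ∘ₗ e0.symm.toLinearMap) := by
    intro x y hxy
    exact e0.symm.injective (h2 hxy)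
  exact pr_ne H nu (comp_eq_zero _ h3 _ ht.symm)

lemma D_hom_zero [IsNoetherianRing S] {G C : ModuleCat.{0} S} (hG : Module.Finite S G)
    (hC : Module.Finite S C) (hX : XType H C)
    (hGX : ∀ (X : Type) [AddCommGroup X] [Module S X], XType H X → ∀ h : X →ₗ[S] G, h = 0)
    (φ : d.D G →ₗ[S] C) : φ = 0 := by
  obtain ⟨e⟩ := d.Dinvol G hG
  have h1 := hGX _ (D_XType d hC hX) (e.toLinearMap ∘ₗ d.Dmap φ)
  have h2 := comp_eq_zero _ e.injective _ h1
  apply (d.Dfull (d.finD G hG) hC).1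
  change d.Dmap φ = d.Dmap 0
  rw [h2, D_map_zero d (d.finD G hG) hC]

lemma D_hom_ne [IsArtinianRing S] {C : ModuleCat.{0} S}
    (hC : Module.Finite S C) [Nontrivial C] : ∃ φ : d.D C →ₗ[S] C, φ ≠ 0 := by
  obtain ⟨K, hK⟩ := IsAtomic.exists_atom (Submodule S C)
  have hs : IsSimpleModule S K := isSimpleModule_iff_isAtom.2 hK
  obtain ⟨mu, ⟨e⟩⟩ := H.fullL (ModuleCat.of S K) hs
  change K ≃ₗ[S] H.L mu at e
  obtain ⟨e0⟩ := d.DL mu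
  let j : H.L mu →ₗ[S] C := K.subtype ∘ₗ e.symm.toLinearMap
  have hj : Function.Injective j := K.injective_subtype.comp e.symm.injective
  have h1 := D_surj d (H.finiteL mu) hC j hj
  refine ⟨j ∘ₗ e0.toLinearMap ∘ₗ d.Dmap j, fun h0 => ?_⟩
  have h2 := comp_eq_zero _ hj _ h0
  have h3 : Function.Surjective (e0.toLinearMap ∘ₗ d.Dmap j) := e0.surjective.comp h1
  rw [h2] at h3
  have : Nontrivial (H.L mu) := IsSimpleModule.nontrivial S _
  obtain ⟨y, hy⟩ := exists_ne (0 : H.L mu)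
  obtain ⟨x, hx⟩ := h3 y
  exact hy hx.symm

lemma ses {X Y Z : ModuleCat.{0} S} (f : X →ₗ[S] Y) (g : Y →ₗ[S] Z)
    (hf : Function.Injective f) (hg : Function.Surjective g)
    (h : LinearMap.range f = LinearMap.ker g) :
    ∃ w, (ShortComplex.mk (ModuleCat.ofHom f) (ModuleCat.ofHom g) w).ShortExact := by
  have hex : Function.Exact f g := LinearMap.exact_iff.2 h.symm
  refine ⟨?_, ModuleCat.shortComplex_shortExact _ hex hf hg⟩
  ext x
  exact hex.apply_apply_eq_zero x

open Abelian in
/-- The homological core of the argument. -/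
lemma core {O Q Qb G C : ModuleCat.{0} S} {DO DQ DQb DG DC : ModuleCat.{0} S}
    (i : O →ₗ[S] Q) (p : Q →ₗ[S] Qb) (hi : Function.Injective i) (hp : Function.Surjective p)
    (hip : LinearMap.range i = LinearMap.ker p)
    (j : Qb →ₗ[S] G) (q : G →ₗ[S] C) (hj : Function.Injective j) (hq : Function.Surjective q)
    (hjq : LinearMap.range j = LinearMap.ker q)
    (p' : DQb →ₗ[S] DQ) (i' : DQ →ₗ[S] DO) (hp' : Function.Injective p')
    (hi' : Function.Surjective i') (hip' : LinearMap.range p' = LinearMap.ker i')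
    (q' : DC →ₗ[S] DG) (j' : DG →ₗ[S] DQb) (hq' : Function.Injective q')
    (hj' : Function.Surjective j') (hjq' : LinearMap.range q' = LinearMap.ker j')
    (hG : Module.Injective S G) (h1 : HasProjectiveDimensionLT DQb 3)
    (h2 : HasProjectiveDimensionLT DO 3) (φ : DC →ₗ[S] C) (hφ : φ ≠ 0)
    (hz : ∀ ψ : DG →ₗ[S] C, ψ = 0) : extNe S DQ Q 2 := by
  have : Injective G := Module.injective_object_of_injective_module S G
  obtain ⟨_, s1⟩ := ses i p hi hp hip
  obtain ⟨_, s2⟩ := ses j q hj hq hjq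
  obtain ⟨_, s3⟩ := ses p' i' hp' hi' hip'
  obtain ⟨_, s4⟩ := ses q' j' hq' hj' hjq'
  let a : Ext.{0} DC C 0 := Ext.mk₀ (ModuleCat.ofHom φ)
  have ha : a ≠ 0 := by
    intro h
    apply hφ
    have := (Ext.mk₀_eq_zero_iff _).1 h
    exact congrArg ModuleCat.Hom.hom this
  let b : Ext.{0} DQb C 1 := s4.extClass.comp a (add_zero 1)
  have hb : b ≠ 0 := by
    intro h
    obtain ⟨x, hx⟩ := Ext.contravariant_sequence_exact₁ s4 C a (add_zero 1) h
    obtain ⟨ψ, rfl⟩ := (Ext.mk₀_bijective _ _).2 x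
    have : ψ = 0 := ModuleCat.hom_ext (hz ψ.hom)
    rw [this, Ext.mk₀_zero, Ext.comp_zero] at hx
    exact ha hx.symm
  let c : Ext.{0} DQb Qb 2 := b.comp s2.extClass rfl
  have hc : c ≠ 0 := by
    intro h
    obtain ⟨x, hx⟩ := Ext.covariant_sequence_exact₃ DQb s2 b rfl h
    have h0 : x = 0 := Ext.eq_zero_of_injective x
    rw [h0, Ext.zero_comp] at hx
    exact hb hx.symm
  obtain ⟨x, hx⟩ := Ext.covariant_sequence_exact₃ DQb s1 c (n₁ := 3) rfl
    (Ext.eq_zero_of_hasProjectiveDimensionLT _ 3 le_rfl)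
  have hx0 : x ≠ 0 := by
    rintro rfl
    rw [Ext.zero_comp] at hx
    exact hc hx.symm
  obtain ⟨y, hy⟩ := Ext.contravariant_sequence_exact₁ s3 Q x (n₁ := 3) rfl
    (Ext.eq_zero_of_hasProjectiveDimensionLT _ 3 le_rfl)
  refine extNe_of_ne y ?_
  rintro rfl
  rw [Ext.comp_zero] at hy
  exact hx0 hy.symm

lemma max_of_not_min (hA : StrongPropA S H) (hg : gfdAlg S H = 1) (lam : Λ)
    (hl : ¬ IsMin lam) : IsMax lam := by
  rw [isMin_iff_forall_not_lt] at hl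
  rw [isMax_iff_forall_not_lt]
  push Not at hl
  obtain ⟨mu, hmu⟩ := hl
  intro nu hnu
  have h1 := hA _ _ hmu
  have h2 := hA _ _ hnu
  have hb : BddAbove {d | ∃ M : ModuleCat.{0} S, Module.Finite S ↥M ∧ gfd S H M = d} := by
    by_contra hc
    have : gfdAlg S H = 0 := Nat.sSup_of_not_bddAbove hc
    omega
  have h3 : gfd S H (H.L nu) ≤ gfdAlg S H := le_csSup hb ⟨_, H.finiteL nu, rfl⟩
  omega

lemma main (k : Type) [Field k] [Algebra k S] [FiniteDimensional k S]
    (hA : StrongPropA S H) (hg : gfdAlg S H = 1)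
    (Q : ModuleCat.{0} S) (hQfin : Module.Finite S ↥Q) (hQ : gfd S H Q = 1) :
    extNe S (d.D Q) Q 2 := by
  have hY := max_of_not_min hA hg
  have hart : IsArtinianRing S := IsArtinianRing.of_finite k S
  have hfl : ∀ X : ModuleCat.{0} S, Module.Finite S X → IsFiniteLength S X := by
    intro X hX
    rw [isFiniteLength_iff_isNoetherian_isArtinian]
    constructor <;> infer_instance
  obtain ⟨G, _, _, f, hGf, hGi, hGF, hGX, hk, hc⟩ :=
    approx H hY (finite_I H k) (hfl Q hQfin)
  have hO : XType H (LinearMap.ker f) := by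
    intro nu hnu h
    refine comp_eq_zero _ (LinearMap.ker f).injective_subtype _ (hk nu hnu _ ?_)
    ext x
    exact (h x).2
  have hC : XType H (G ⧸ LinearMap.range f) := by
    intro nu hnu h
    obtain ⟨t, rfl⟩ := lift H (LinearMap.range f).mkQ (Submodule.mkQ_surjective _) h
    ext x
    exact (Submodule.Quotient.mk_eq_zero _).2 (hc nu hnu t ⟨x, rfl⟩)
  have hOf : Module.Finite S (LinearMap.ker f) := inferInstance
  have hQbf : Module.Finite S (LinearMap.range f) := inferInstance
  have hCf : Module.Finite S (G ⧸ LinearMap.range f) := inferInstance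
  have hnt : Nontrivial (G ⧸ LinearMap.range f) := by
    rw [Submodule.Quotient.nontrivial_iff]
    intro htop
    have h1 : Fil H (LinearMap.ker f) :=
      Fil.of_XType (hfl (ModuleCat.of S (LinearMap.ker f)) hOf) hO
    have h2 := (hGF.extn f (LinearMap.range_eq_top.1 htop) h1).gfd
    have h3 : gfd S H Q = 0 := h2
    omega
  let mO := ModuleCat.of S (LinearMap.ker f)
  let mQb := ModuleCat.of S (LinearMap.range f)
  let mG := ModuleCat.of S G
  let mC := ModuleCat.of S (G ⧸ LinearMap.range f)
  let i : mO →ₗ[S] Q := (LinearMap.ker f).subtype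
  let p : Q →ₗ[S] mQb := f.rangeRestrict
  let j : mQb →ₗ[S] mG := (LinearMap.range f).subtype
  let q : mG →ₗ[S] mC := (LinearMap.range f).mkQ
  have hi : Function.Injective i := Submodule.injective_subtype _
  have hp : Function.Surjective p := f.surjective_rangeRestrict
  have hip : LinearMap.range i = LinearMap.ker p := by
    rw [show LinearMap.range i = LinearMap.ker f from Submodule.range_subtype _]
    exact f.ker_rangeRestrict.symm
  have hj : Function.Injective j := Submodule.injective_subtype _
  have hq : Function.Surjective q := Submodule.mkQ_surjective _
  have hjq : LinearMap.range j = LinearMap.ker q := by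
    rw [show LinearMap.range j = LinearMap.range f from Submodule.range_subtype _]
    exact (Submodule.ker_mkQ _).symm
  obtain ⟨e1, e2, e3⟩ := d.Dexact hOf hQfin hQbf i p hi hp hip
  obtain ⟨e4, e5, e6⟩ := d.Dexact hQbf hGf hCf j q hj hq hjq
  obtain ⟨φ, hφ⟩ := D_hom_ne d (C := mC) hCf
  exact core i p hi hp hip j q hj hq hjq _ _ e1 e2 e3 _ _ e4 e5 e6 hGi
    (PD_all H hY (hfl _ (d.finD _ hQbf))) (PD_all H hY (hfl _ (d.finD _ hOf))) φ hφ
    (fun ψ => D_hom_zero d (G := mG) (C := mC) hGf hCf hC hGX ψ)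

end QHProof

end PartE

open QHPaper in
/-- Let `S` be a quasi-hereditary algebra with a simple-preserving duality `°`
satisfying strong property A and with `gfd(S) = 1`. Then for every finite-dimensional
`S`-module `Q` with `gfd(Q) = 1` one has `Ext²_S(Q°, Q) ≠ 0`. -/
theorem stmt0 (k S Λ : Type) [Field k] [Ring S] [Algebra k S] [FiniteDimensional k S]
    [Fintype Λ] [PartialOrder Λ]
    (QH : QHData S Λ) (dual : Duality S QH)
    (hA : StrongPropA S QH) (hgfd : gfdAlg S QH = 1)
    (Q : ModuleCat.{0} S) (hQfin : Module.Finite S ↥Q) (hQ : gfd S QH Q = 1) :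
    extNe S (dual.D Q) Q 2 := by
  exact QHProof.main dual k hA hgfd Q hQfin hQ
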